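/- arXiv:1610.03418 — 9 statements merged into one kernel-verified Lean document; each statement's English description precedes it below -/
import Mathlib

section
/- No finite tree with at least two vertices admits a uniform avoidance coupling of two simple random walks. That is, if G = (V, E) is a finite connected acyclic simple graph with |V| ≥ 2, then there is no pair (T, s) forming a uniform avoidance coupling of two simple random walks on G. -/
open Finset

/-- A uniform avoidance coupling of two simple random walks on `G`:
stochasticity, stationarity, no collision, avoidance, and uniform faithfulness. -/
def IsUAC {V : Type*} [Fintype V] [DecidableEq V] (G : SimpleGraph V) [DecidableRel G.Adj]
    (T : V × V → V × V → ℝ) (s : V × V → ℝ) : Prop :=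
  (∀ p q : V × V, 0 ≤ T p q) ∧
  (∀ p : V × V, ∑ q : V × V, T p q = 1) ∧
  (∀ p : V × V, 0 ≤ s p) ∧
  (∑ p : V × V, s p) = 1 ∧
  (∀ q : V × V, ∑ p : V × V, s p * T p q = s q) ∧
  (∀ x : V, s (x, x) = 0) ∧
  (∀ x y x' y' : V, 0 < s (x, y) → 0 < T (x, y) (x', y') → x' ≠ y ∧ y' ≠ x') ∧
  (∀ x y : V, 0 < s (x, y) →
    (∀ x' : V, (∑ y' : V, T (x, y) (x', y')) =
      if G.Adj x x' then 1 / (G.degree x : ℝ) else 0) ∧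
    (∀ y' : V, (∑ x' : V, T (x, y) (x', y')) =
      if G.Adj y y' then 1 / (G.degree y : ℝ) else 0))

lemma uac_exists_steps {V : Type*} [DecidableEq V] (G : SimpleGraph V) (hconn : G.Connected)
    (x y : V) (hxy : x ≠ y) (hadj : ¬ G.Adj x y) :
    ∃ a b : V, G.Adj x a ∧ G.Adj y b ∧ ∀ x' y' : V, G.Adj x x' → G.Adj y y' →
      (G.dist x' y' : ℝ) ≤ G.dist x y + 2 - 2 * (if x' = a then 1 else 0)
        - 2 * (if y' = b then 1 else 0) := by
  obtain ⟨p, hp⟩ := hconn.exists_walk_length_eq_dist x y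
  cases p with
  | nil => exact absurd rfl hxy
  | @cons _ a _ h q =>
    obtain ⟨r, hr⟩ : ∃ r : G.Walk y a, r.length = q.length := ⟨q.reverse, by simp⟩
    cases r with
    | nil => exact absurd h hadj
    | @cons _ b _ h' r =>
      simp only [SimpleGraph.Walk.length_cons] at hp hr
      refine ⟨a, b, h, h', ?_⟩
      intro x' y' hx hy
      have h1 := SimpleGraph.dist_le r
      have h2 : G.dist b a = G.dist a b := SimpleGraph.dist_comm
      have e1 : G.dist x x' = 1 := SimpleGraph.dist_eq_one_iff_adj.2 hx
      have e1' : G.dist x' x = 1 := SimpleGraph.dist_eq_one_iff_adj.2 hx.symm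
      have e2 : G.dist y y' = 1 := SimpleGraph.dist_eq_one_iff_adj.2 hy
      have e3 : G.dist x a = 1 := SimpleGraph.dist_eq_one_iff_adj.2 h
      have e4 : G.dist b y = 1 := SimpleGraph.dist_eq_one_iff_adj.2 h'.symm
      have t1 := hconn.dist_triangle (u := x') (v := x) (w := y)
      have t2 := hconn.dist_triangle (u := x') (v := y) (w := y')
      have t3 := hconn.dist_triangle (u := a) (v := b) (w := y)
      have t4 := hconn.dist_triangle (u := a) (v := y) (w := y')
      have t5 := hconn.dist_triangle (u := x) (v := a) (w := b)
      have t6 := hconn.dist_triangle (u := x') (v := x) (w := b)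
      split_ifs with ha hb hb
      · subst ha; subst hb
        have : G.dist x' y' + 2 ≤ G.dist x y := by omega
        have : (G.dist x' y' : ℝ) + 2 ≤ G.dist x y := by exact_mod_cast this
        linarith
      · subst ha
        have : G.dist x' y' ≤ G.dist x y := by omega
        have : (G.dist x' y' : ℝ) ≤ G.dist x y := by exact_mod_cast this
        linarith
      · subst hb
        have : G.dist x' y' ≤ G.dist x y := by omega
        have : (G.dist x' y' : ℝ) ≤ G.dist x y := by exact_mod_cast this
        linarith
      · have : G.dist x' y' ≤ G.dist x y + 2 := by omega
        have : (G.dist x' y' : ℝ) ≤ G.dist x y + 2 := by exact_mod_cast this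
        linarith

lemma uac_stationary {V : Type*} [Fintype V] [DecidableEq V]
    (G : SimpleGraph V) [DecidableRel G.Adj] (hconn : G.Connected)
    (hdeg : ∀ v, 0 < G.degree v) (μ : V → ℝ) (h1 : ∑ x, μ x = 1)
    (hst : ∀ x', μ x' = ∑ x, μ x * (if G.Adj x x' then 1 / (G.degree x : ℝ) else 0)) :
    (∑ x, μ x * (1 / (G.degree x : ℝ))) * (2 * #G.edgeFinset) = Fintype.card V := by
  have hd : ∀ v, (G.degree v : ℝ) ≠ 0 := fun v => by exact_mod_cast (hdeg v).ne'
  have hL : Matrix.mulVec (G.lapMatrix ℝ) (fun x => μ x * (1 / (G.degree x : ℝ))) = 0 := by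
    ext v
    rw [SimpleGraph.lapMatrix_mulVec_apply, Pi.zero_apply]
    have e : (G.degree v : ℝ) * (μ v * (1 / (G.degree v : ℝ))) = μ v := by
      field_simp [hd v]
    rw [e, sub_eq_zero, hst v, SimpleGraph.neighborFinset_eq_filter, Finset.sum_filter]
    refine Finset.sum_congr rfl fun x _ => ?_
    by_cases h : G.Adj v x
    · rw [if_pos h, if_pos h.symm]
    · rw [if_neg h, if_neg (fun h' => h h'.symm), mul_zero]
  rw [SimpleGraph.lapMatrix_mulVec_eq_zero_iff_forall_reachable] at hL
  obtain ⟨v₀⟩ := hconn.nonempty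
  set c := μ v₀ * (1 / (G.degree v₀ : ℝ)) with hc
  have hL' : ∀ x, μ x * (1 / (G.degree x : ℝ)) = c := fun x => hL x v₀ (hconn.preconnected x v₀)
  have hμ : ∀ x, μ x = c * G.degree x := fun x => by
    rw [← hL' x]; field_simp [hd x]
  have hs : (∑ x, (G.degree x : ℝ)) = 2 * #G.edgeFinset := by
    exact_mod_cast G.sum_degrees_eq_twice_card_edges
  have h2 : c * (2 * #G.edgeFinset) = 1 := by
    rw [← hs, Finset.mul_sum, ← h1]
    exact Finset.sum_congr rfl fun x _ => (hμ x).symm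
  simp only [hL', Finset.sum_const, nsmul_eq_mul, Finset.card_univ]
  rw [mul_assoc, h2, mul_one]

/-- No finite tree with at least two vertices admits a uniform avoidance coupling
of two simple random walks. -/
theorem no_uac_on_tree {V : Type*} [Fintype V] [DecidableEq V]
    (G : SimpleGraph V) [DecidableRel G.Adj]
    (hconn : G.Connected) (hacyclic : G.IsAcyclic) (hcard : 2 ≤ Fintype.card V) :
    ¬ ∃ (T : V × V → V × V → ℝ) (s : V × V → ℝ), IsUAC G T s := by
  rintro ⟨T, s, hT0, hT1, hs0, hs1, hst, hdiag, hav, hf⟩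
  have : Nontrivial V := Fintype.one_lt_card_iff_nontrivial.1 hcard
  have hdeg : ∀ v, 0 < G.degree v := fun v => hconn.preconnected.degree_pos_of_nontrivial v
  have hm : #G.edgeFinset + 1 = Fintype.card V :=
    SimpleGraph.IsTree.card_edgeFinset ⟨hconn, hacyclic⟩
  have hpt : ∀ p : V × V, s p * (∑ q : V × V, T p q * (G.dist q.1 q.2 : ℝ)) ≤
      s p * (G.dist p.1 p.2 + 2 - 2 * (1 / (G.degree p.1 : ℝ)) - 2 * (1 / (G.degree p.2 : ℝ))) := by
    rintro ⟨x, y⟩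
    rcases (hs0 (x, y)).eq_or_lt with h0 | hpos
    · rw [← h0]; simp
    refine mul_le_mul_of_nonneg_left ?_ hpos.le
    obtain ⟨hfx, hfy⟩ := hf x y hpos
    have hxy : x ≠ y := by
      rintro rfl
      rw [hdiag] at hpos
      exact lt_irrefl _ hpos
    have hadj : ¬ G.Adj x y := by
      intro h
      have h1 := hfx y
      rw [if_pos h] at h1
      have hz : ∑ y' : V, T (x, y) (y, y') = 0 := by
        refine Finset.sum_eq_zero fun y' _ => ?_
        by_contra hne
        exact (hav x y y y' hpos (lt_of_le_of_ne (hT0 _ _) (Ne.symm hne))).1 rfl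
      have : 0 < 1 / (G.degree x : ℝ) := by
        have : (0 : ℝ) < G.degree x := by exact_mod_cast hdeg x
        positivity
      linarith
    obtain ⟨a, b, ha, hb, hab⟩ := uac_exists_steps G hconn x y hxy hadj
    have hle : ∀ q : V × V, T (x, y) q * (G.dist q.1 q.2 : ℝ) ≤
        T (x, y) q * (G.dist x y + 2 - 2 * (if q.1 = a then 1 else 0)
          - 2 * (if q.2 = b then 1 else 0)) := by
      rintro ⟨x', y'⟩
      by_cases hx : G.Adj x x'
      · by_cases hy : G.Adj y y'
        · exact mul_le_mul_of_nonneg_left (hab x' y' hx hy) (hT0 _ _)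
        · have h1 := hfy y'
          rw [if_neg hy, Finset.sum_eq_zero_iff_of_nonneg (fun _ _ => hT0 _ _)] at h1
          rw [h1 x' (Finset.mem_univ _)]; simp
      · have h1 := hfx x'
        rw [if_neg hx, Finset.sum_eq_zero_iff_of_nonneg (fun _ _ => hT0 _ _)] at h1
        rw [h1 y' (Finset.mem_univ _)]; simp
    refine (Finset.sum_le_sum fun q _ => hle q).trans (le_of_eq ?_)
    have hA : ∑ q : V × V, T (x, y) q * (if q.1 = a then 1 else 0) = 1 / (G.degree x : ℝ) := by
      have h1 := hfx a
      rw [if_pos ha] at h1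
      rw [Fintype.sum_prod_type, ← h1, Finset.sum_eq_single a]
      · simp
      · intro c _ hc; simp [hc]
      · simp
    have hB : ∑ q : V × V, T (x, y) q * (if q.2 = b then 1 else 0) = 1 / (G.degree y : ℝ) := by
      have h1 := hfy b
      rw [if_pos hb] at h1
      rw [Fintype.sum_prod_type_right, ← h1, Finset.sum_eq_single b]
      · simp
      · intro c _ hc; simp [hc]
      · simp
    calc _ = (∑ q : V × V, T (x, y) q) * (G.dist x y + 2)
          - 2 * (∑ q : V × V, T (x, y) q * (if q.1 = a then 1 else 0))
          - 2 * (∑ q : V × V, T (x, y) q * (if q.2 = b then 1 else 0)) := by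
          rw [Finset.sum_mul, Finset.mul_sum, Finset.mul_sum, ← Finset.sum_sub_distrib,
            ← Finset.sum_sub_distrib]
          exact Finset.sum_congr rfl fun q _ => by ring
      _ = _ := by rw [hA, hB, hT1]; ring
  have hsum := Finset.sum_le_sum fun p (_ : p ∈ Finset.univ) => hpt p
  have hl : ∑ p : V × V, s p * (∑ q : V × V, T p q * (G.dist q.1 q.2 : ℝ)) =
      ∑ q : V × V, s q * (G.dist q.1 q.2 : ℝ) := by
    simp_rw [Finset.mul_sum]
    rw [Finset.sum_comm]
    refine Finset.sum_congr rfl fun q _ => ?_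
    rw [← hst q, Finset.sum_mul]
    exact Finset.sum_congr rfl fun p _ => by ring
  have hr : ∑ p : V × V, s p * (G.dist p.1 p.2 + 2 - 2 * (1 / (G.degree p.1 : ℝ))
      - 2 * (1 / (G.degree p.2 : ℝ))) = ∑ q : V × V, s q * (G.dist q.1 q.2 : ℝ)
      + (∑ p : V × V, s p) * 2 - 2 * (∑ p : V × V, s p * (1 / (G.degree p.1 : ℝ)))
      - 2 * (∑ p : V × V, s p * (1 / (G.degree p.2 : ℝ))) := by
    rw [Finset.sum_mul, Finset.mul_sum, Finset.mul_sum, ← Finset.sum_add_distrib,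
      ← Finset.sum_sub_distrib, ← Finset.sum_sub_distrib]
    exact Finset.sum_congr rfl fun q _ => by ring
  rw [hl, hr, hs1] at hsum
  have hX := uac_stationary G hconn hdeg (fun x => ∑ y, s (x, y))
    (by rw [← hs1, Fintype.sum_prod_type]) (by
      intro x'
      calc ∑ y', s (x', y') = ∑ y', ∑ p : V × V, s p * T p (x', y') :=
            Finset.sum_congr rfl fun y' _ => (hst _).symm
        _ = ∑ p : V × V, s p * ∑ y', T p (x', y') := by
            rw [Finset.sum_comm]; simp_rw [Finset.mul_sum]
        _ = ∑ p : V × V, s p * (if G.Adj p.1 x' then 1 / (G.degree p.1 : ℝ) else 0) := by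
            refine Finset.sum_congr rfl ?_
            rintro ⟨x, y⟩ _
            rcases (hs0 (x, y)).eq_or_lt with h0 | hpos
            · rw [← h0]; simp
            · rw [(hf x y hpos).1 x']
        _ = _ := by
            rw [Fintype.sum_prod_type]
            simp_rw [Finset.sum_mul])
  have hY := uac_stationary G hconn hdeg (fun y => ∑ x, s (x, y))
    (by rw [← hs1, Fintype.sum_prod_type_right]) (by
      intro y'
      calc ∑ x', s (x', y') = ∑ x', ∑ p : V × V, s p * T p (x', y') :=
            Finset.sum_congr rfl fun x' _ => (hst _).symm
        _ = ∑ p : V × V, s p * ∑ x', T p (x', y') := by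
            rw [Finset.sum_comm]; simp_rw [Finset.mul_sum]
        _ = ∑ p : V × V, s p * (if G.Adj p.2 y' then 1 / (G.degree p.2 : ℝ) else 0) := by
            refine Finset.sum_congr rfl ?_
            rintro ⟨x, y⟩ _
            rcases (hs0 (x, y)).eq_or_lt with h0 | hpos
            · rw [← h0]; simp
            · rw [(hf x y hpos).2 y']
        _ = _ := by
            rw [Fintype.sum_prod_type_right]
            simp_rw [Finset.sum_mul])
  have hX' : ∑ p : V × V, s p * (1 / (G.degree p.1 : ℝ)) =
      ∑ x, (∑ y, s (x, y)) * (1 / (G.degree x : ℝ)) := by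
    rw [Fintype.sum_prod_type]; simp_rw [Finset.sum_mul]
  have hY' : ∑ p : V × V, s p * (1 / (G.degree p.2 : ℝ)) =
      ∑ y, (∑ x, s (x, y)) * (1 / (G.degree y : ℝ)) := by
    rw [Fintype.sum_prod_type_right]; simp_rw [Finset.sum_mul]
  rw [hX', hY'] at hsum
  have hm' : (#G.edgeFinset : ℝ) + 1 = Fintype.card V := by exact_mod_cast hm
  have hm0 : (0 : ℝ) ≤ #G.edgeFinset := Nat.cast_nonneg _
  rw [← hm'] at hX hY
  generalize ∑ x, (∑ y, s (x, y)) * (1 / (G.degree x : ℝ)) = A at *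
  generalize ∑ y, (∑ x, s (x, y)) * (1 / (G.degree y : ℝ)) = B at *
  have hAB : A + B ≤ 1 := by linarith
  nlinarith [mul_le_mul_of_nonneg_right hAB hm0]
end

section
/- Let G be a finite simple graph on n ≥ 2 vertices that has a vertex adjacent to every other vertex. Then G admits no uniform avoidance coupling of two simple random walks. In particular, no complete graph K_n with n ≥ 2 admits a uniform avoidance coupling. -/
open Finset

/-- A finite simple graph on at least two vertices with a vertex adjacent to every
other vertex admits no uniform avoidance coupling of two simple random walks.
In particular no complete graph on n ≥ 2 vertices does. -/
theorem no_uac_with_dominating_vertex {V : Type*} [Fintype V] [DecidableEq V]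
    (G : SimpleGraph V) [DecidableRel G.Adj]
    (hcard : 2 ≤ Fintype.card V)
    (hdom : ∃ v : V, ∀ u : V, u ≠ v → G.Adj v u) :
    ¬ ∃ (T : V × V → V × V → ℝ) (s : V × V → ℝ), IsUAC G T s := by
  rintro ⟨T, s, hT, -, hs, hs1, hst, hcol, hav, huf⟩
  obtain ⟨v, hv⟩ := hdom
  have key : ∀ x y, 0 < s (x, y) → ¬ G.Adj x y := by
    intro x y hxy hadj
    have h1 := (huf x y hxy).1 y
    have h0 : ∑ y' : V, T (x, y) (y, y') = 0 := by
      apply Finset.sum_eq_zero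
      intro y' _
      by_contra hne
      exact (hav x y y y' hxy (lt_of_le_of_ne (hT _ _) (Ne.symm hne))).1 rfl
    have hd : 0 < G.degree x := (G.degree_pos_iff_exists_adj x).2 ⟨y, hadj⟩
    have hd' : (0 : ℝ) < 1 / (G.degree x : ℝ) := by positivity
    rw [h0, if_pos hadj] at h1
    linarith
  have key2 : ∀ y, ¬ 0 < s (v, y) := by
    intro y hy
    have hne : y ≠ v := by
      rintro rfl
      rw [hcol] at hy
      exact lt_irrefl _ hy
    exact key v y hy (hv y hne)
  obtain ⟨⟨x, y⟩, -, hxy⟩ : ∃ p ∈ (Finset.univ : Finset (V × V)), 0 < s p := by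
    apply Finset.exists_lt_of_sum_lt (f := fun _ => (0 : ℝ))
    simp [hs1]
  have hxv : x ≠ v := by
    rintro rfl
    exact key2 y hxy
  have hadj : G.Adj x v := (hv x hxv).symm
  have hd : 0 < G.degree x := (G.degree_pos_iff_exists_adj x).2 ⟨v, hadj⟩
  have hd' : (0 : ℝ) < 1 / (G.degree x : ℝ) := by positivity
  have h1 := (huf x y hxy).1 v
  rw [if_pos hadj] at h1
  obtain ⟨y', -, hy'⟩ : ∃ y' ∈ (Finset.univ : Finset V), 0 < T (x, y) (v, y') := by
    apply Finset.exists_lt_of_sum_lt (f := fun _ => (0 : ℝ))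
    rw [h1]
    simpa using hd
  apply key2 y'
  rw [← hst]
  exact Finset.sum_pos' (fun p _ => mul_nonneg (hs p) (hT _ _))
    ⟨(x, y), Finset.mem_univ _, mul_pos hxy hy'⟩
end

section
/- Let G = (V, E) be a finite simple graph and let F ⊆ V × V be its forbidden set. If (x, y) ∈ F, then for every uniform avoidance coupling (T, s) of two simple random walks on G, s(x, y) = 0. That is, every pair in the closure F is a forbidden state. -/
open Finset

/-- A set `S` of pairs is closed under the forbidden-state generation rules:
(i) it contains all diagonal and adjacent pairs; (ii) it contains every pair `(x, y)`
for which no nonnegative "flow" `w` exists that is supported on pairs of neighbors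
`(u, v)` of `(x, y)` outside `S`, with row sums `1/d(x)` on `N(x)` and column sums
`1/d(y)` on `N(y)`. The forbidden set `F` is the smallest such set. -/
def ForbiddenClosed {V : Type*} [Fintype V] [DecidableEq V]
    (G : SimpleGraph V) [DecidableRel G.Adj] (S : Set (V × V)) : Prop :=
  (∀ x y : V, (x = y ∨ G.Adj x y) → (x, y) ∈ S) ∧
  (∀ x y : V,
    (¬ ∃ w : V × V → ℝ,
      (∀ p : V × V, 0 ≤ w p) ∧
      (∀ u v : V, w (u, v) ≠ 0 → G.Adj x u ∧ G.Adj y v ∧ (u, v) ∉ S) ∧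
      (∀ u : V, G.Adj x u → ∑ v : V, w (u, v) = 1 / (G.degree x : ℝ)) ∧
      (∀ v : V, G.Adj y v → ∑ u : V, w (u, v) = 1 / (G.degree y : ℝ))) →
    (x, y) ∈ S)

/-- Every pair in the forbidden set `F` (the smallest set closed under the
forbidden-state generation rules) is a forbidden state: it has stationary
probability zero in every uniform avoidance coupling of two simple random walks. -/
theorem forbidden_states_are_forbidden {V : Type*} [Fintype V] [DecidableEq V]
    (G : SimpleGraph V) [DecidableRel G.Adj]
    (F : Set (V × V)) (hF : IsLeast {S : Set (V × V) | ForbiddenClosed G S} F)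
    (x y : V) (hxy : (x, y) ∈ F)
    (T : V × V → V × V → ℝ) (s : V × V → ℝ) (h : IsUAC G T s) :
    s (x, y) = 0 := by
  obtain ⟨hT0, -, hs0, -, hst, hd, hav, huf⟩ := h
  have hpos : ∀ p, s p ≠ 0 → 0 < s p := fun p hp => lt_of_le_of_ne (hs0 p) (Ne.symm hp)
  have key : ForbiddenClosed G {p : V × V | s p = 0} := by
    refine ⟨?_, ?_⟩
    · rintro a b (rfl | hab)
      · exact hd a
      · by_contra hne
        have hp := hpos _ hne
        have h1 := (huf a b hp).1 b
        rw [if_pos hab] at h1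
        have h2 : ∑ y' : V, T (a, b) (b, y') = 0 := by
          apply Finset.sum_eq_zero
          intro y' _
          by_contra hT
          exact (hav a b b y' hp (lt_of_le_of_ne (hT0 _ _) (Ne.symm hT))).1 rfl
        have h3 : 0 < G.degree a := (G.degree_pos_iff_exists_adj a).2 ⟨b, hab⟩
        have h4 : (0 : ℝ) < 1 / (G.degree a : ℝ) := by positivity
        linarith
    · intro a b hno
      by_contra hne
      have hp := hpos _ hne
      apply hno
      refine ⟨T (a, b), hT0 _, ?_, ?_, ?_⟩
      · intro u v hT
        have hTp : 0 < T (a, b) (u, v) := lt_of_le_of_ne (hT0 _ _) (Ne.symm hT)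
        refine ⟨?_, ?_, ?_⟩
        · by_contra hadj
          have h1 := (huf a b hp).1 u
          rw [if_neg hadj] at h1
          have h2 := Finset.single_le_sum (f := fun y' => T (a, b) (u, y'))
            (fun i _ => hT0 _ _) (Finset.mem_univ v)
          linarith
        · by_contra hadj
          have h1 := (huf a b hp).2 v
          rw [if_neg hadj] at h1
          have h2 := Finset.single_le_sum (f := fun x' => T (a, b) (x', v))
            (fun i _ => hT0 _ _) (Finset.mem_univ u)
          linarith
        · intro h0
          have h0' : s (u, v) = 0 := h0
          have h1 := hst (u, v)
          have h2 := Finset.single_le_sum (f := fun p => s p * T p (u, v))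
            (fun i _ => mul_nonneg (hs0 _) (hT0 _ _)) (Finset.mem_univ (a, b))
          have h3 := mul_pos hp hTp
          linarith
      · intro u hu
        rw [(huf a b hp).1 u, if_pos hu]
      · intro v hv
        rw [(huf a b hp).2 v, if_pos hv]
  exact hF.2 key hxy
end

section
/- Let G be a finite simple graph with a nonempty vertex set that is bipartite (its vertex set can be partitioned into two parts with every edge joining the two parts) and in which every vertex has degree at least 2. Then G admits a uniform avoidance coupling of two simple random walks. -/
open Finset

theorem exists_stat {ι : Type*} [Fintype ι] [DecidableEq ι] [Nonempty ι]
    (T : ι → ι → ℝ) (h0 : ∀ p q, 0 ≤ T p q) (h1 : ∀ p, ∑ q, T p q = 1) :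
    ∃ s : ι → ℝ, (∀ p, 0 ≤ s p) ∧ ∑ p, s p = 1 ∧ ∀ q, ∑ p, s p * T p q = s q := by
  let M : Matrix ι ι ℝ := Matrix.of T - 1
  have hdet : M.det = 0 := by
    rw [← Matrix.exists_mulVec_eq_zero_iff]
    refine ⟨fun _ => 1, ?_, ?_⟩
    · intro h
      have := congrFun h (Classical.arbitrary ι)
      simp at this
    · rw [Matrix.sub_mulVec, Matrix.one_mulVec]
      ext p
      simp [Matrix.mulVec, dotProduct, h1]
  obtain ⟨v, hv, hvM⟩ := Matrix.exists_vecMul_eq_zero_iff.2 hdet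
  have hv1 : ∀ q, ∑ p, v p * T p q = v q := by
    intro q
    rw [Matrix.vecMul_sub, Matrix.vecMul_one] at hvM
    have := congrFun hvM q
    simp [Matrix.vecMul, dotProduct] at this
    linarith
  have hle : ∀ q, |v q| ≤ ∑ p, |v p| * T p q := by
    intro q
    calc |v q| = |∑ p, v p * T p q| := by rw [hv1]
      _ ≤ ∑ p, |v p * T p q| := Finset.abs_sum_le_sum_abs _ _
      _ = _ := Finset.sum_congr rfl fun p _ => by rw [abs_mul, abs_of_nonneg (h0 p q)]
  have hsum : ∑ q, |v q| = ∑ q, ∑ p, |v p| * T p q := by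
    rw [Finset.sum_comm]
    refine Finset.sum_congr rfl fun p _ => ?_
    rw [← Finset.mul_sum, h1, mul_one]
  have heq := (Finset.sum_eq_sum_iff_of_le (fun q _ => hle q)).1 hsum
  have hpos : 0 < ∑ q, |v q| := by
    obtain ⟨i, hi⟩ := Function.ne_iff.1 hv
    exact Finset.sum_pos' (fun _ _ => abs_nonneg _) ⟨i, Finset.mem_univ _, abs_pos.2 hi⟩
  refine ⟨fun p => |v p| / ∑ q, |v q|, fun p => by positivity, ?_, fun q => ?_⟩
  · rw [← Finset.sum_div, div_self hpos.ne']
  · show ∑ p, |v p| / (∑ q, |v q|) * T p q = |v q| / ∑ q, |v q|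
    rw [heq q (Finset.mem_univ _), Finset.sum_div]
    exact Finset.sum_congr rfl fun p _ => by ring

theorem exists_corr {V : Type*} [Fintype V] [DecidableEq V] (X Y : Finset V)
    (hX : 2 ≤ X.card) (hY : 2 ≤ Y.card) :
    ∃ R : V → V → ℝ,
      (∀ x y, 0 ≤ (if x ∈ X ∧ y ∈ Y ∧ x ≠ y then (1 : ℝ) else 0) + R x y) ∧
      (∀ x, R x x = 0) ∧
      (∀ x, ∑ y, R x y = if x ∈ X ∩ Y then 1 else 0) ∧
      (∀ y, ∑ x, R x y = if y ∈ X ∩ Y then 1 else 0) := by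
  by_cases hk : (X ∩ Y).card = 1
  · obtain ⟨c, hc⟩ := Finset.card_eq_one.1 hk
    have hcm : c ∈ X ∩ Y := by simp [hc]
    obtain ⟨x0, hx0, hxc⟩ := Finset.exists_mem_ne (by omega : 1 < X.card) c
    obtain ⟨y0, hy0, hyc⟩ := Finset.exists_mem_ne (by omega : 1 < Y.card) c
    have hne : x0 ≠ y0 := by
      rintro rfl
      have : x0 ∈ X ∩ Y := Finset.mem_inter.2 ⟨hx0, hy0⟩
      rw [hc] at this
      exact hxc (by simpa using this)
    refine ⟨fun x y => (if x = c then 1 else 0) * (if y = y0 then 1 else 0)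
      + (if x = x0 then 1 else 0) * (if y = c then 1 else 0)
      - (if x = x0 then 1 else 0) * (if y = y0 then 1 else 0), ?_, ?_, ?_, ?_⟩
    · intro x y
      by_cases h : x = x0 ∧ y = y0
      · obtain ⟨rfl, rfl⟩ := h
        simp [hx0, hy0, hne, hxc, hyc]
      · have : (if x = x0 then (1:ℝ) else 0) * (if y = y0 then 1 else 0) = 0 := by
          by_cases h1 : x = x0
          · simp [h1] at h; simp [h]
          · simp [h1]
        simp only [this]
        have : ∀ (p : Prop) [Decidable p], (0:ℝ) ≤ if p then 1 else 0 := by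
          intro p _; split_ifs <;> norm_num
        rw [sub_zero]
        exact add_nonneg (this _) (add_nonneg (mul_nonneg (this _) (this _))
          (mul_nonneg (this _) (this _)))
    · intro x
      by_cases h1 : x = c
      · subst h1; simp [hxc.symm, hyc.symm]
      · by_cases h2 : x = x0
        · subst h2; simp [hne, h1]
        · simp [h1, h2]
    · intro x
      simp only [Finset.sum_add_distrib, Finset.sum_sub_distrib, ← Finset.mul_sum, hc]
      simp
    · intro x
      simp only [Finset.sum_add_distrib, Finset.sum_sub_distrib, ← Finset.sum_mul, hc]
      simp
  · have key : ∀ x, (∑ y, if x ∈ X ∩ Y ∧ y ∈ X ∩ Y ∧ x ≠ y then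
        (1 / (((X ∩ Y).card : ℝ) - 1)) else 0) = if x ∈ X ∩ Y then 1 else 0 := by
      intro x
      by_cases hx : x ∈ X ∩ Y
      · have hpos := Finset.card_pos.2 ⟨x, hx⟩
        have : (univ.filter fun y => x ∈ X ∩ Y ∧ y ∈ X ∩ Y ∧ x ≠ y) = (X ∩ Y).erase x := by
          ext y
          simp only [Finset.mem_filter, Finset.mem_univ, true_and, Finset.mem_erase, hx]
          tauto
        rw [← Finset.sum_filter, this, Finset.sum_const, Finset.card_erase_of_mem hx,
          if_pos hx, nsmul_eq_mul, Nat.cast_sub hpos]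
        have h2 : (2:ℝ) ≤ ((X ∩ Y).card : ℝ) := by
          have : 2 ≤ (X ∩ Y).card := by omega
          exact_mod_cast this
        push_cast
        rw [mul_one_div, div_self]
        linarith
      · simp only [hx, false_and, if_false, Finset.sum_const_zero]
    refine ⟨fun x y => if x ∈ X ∩ Y ∧ y ∈ X ∩ Y ∧ x ≠ y then
        (1 / (((X ∩ Y).card : ℝ) - 1)) else 0, ?_, ?_, key, ?_⟩
    · intro x y
      apply add_nonneg
      · split_ifs <;> norm_num
      · dsimp only
        split_ifs with h
        · have hpos : (1:ℝ) ≤ (X ∩ Y).card := by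
            exact_mod_cast Finset.card_pos.2 ⟨x, h.1⟩
          exact div_nonneg zero_le_one (by linarith)
        · exact le_rfl
    · intro x; simp
    · intro y
      rw [← key y]
      refine Finset.sum_congr rfl fun x _ => if_congr ?_ rfl rfl
      rw [ne_comm]; tauto

theorem exists_coupling {V : Type*} [Fintype V] [DecidableEq V] (X Y : Finset V)
    (hX : 2 ≤ X.card) (hY : 2 ≤ Y.card) :
    ∃ π : V → V → ℝ, (∀ x y, 0 ≤ π x y) ∧ (∀ x, π x x = 0) ∧
      (∀ x, ∑ y, π x y = if x ∈ X then 1 / (X.card : ℝ) else 0) ∧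
      (∀ y, ∑ x, π x y = if y ∈ Y then 1 / (Y.card : ℝ) else 0) := by
  obtain ⟨R, h0, hd, hr, hc⟩ := exists_corr X Y hX hY
  have hXp : (0:ℝ) < X.card := by exact_mod_cast (by omega : 0 < X.card)
  have hYp : (0:ℝ) < Y.card := by exact_mod_cast (by omega : 0 < Y.card)
  have cnt : ∀ (A B : Finset V) (x : V), (∑ y, if x ∈ A ∧ y ∈ B ∧ x ≠ y then (1:ℝ) else 0)
      + (if x ∈ A ∩ B then 1 else 0) = if x ∈ A then (B.card : ℝ) else 0 := by
    intro A B x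
    by_cases hx : x ∈ A
    · have : (univ.filter fun y => x ∈ A ∧ y ∈ B ∧ x ≠ y) = B.erase x := by
        ext y
        simp only [Finset.mem_filter, Finset.mem_univ, true_and, Finset.mem_erase, hx]
        tauto
      rw [← Finset.sum_filter, this, Finset.sum_const, nsmul_eq_mul, mul_one, if_pos hx]
      by_cases hb : x ∈ B
      · rw [if_pos (Finset.mem_inter.2 ⟨hx, hb⟩)]
        exact_mod_cast Finset.card_erase_add_one hb
      · simp [hb]
    · simp [hx]
  refine ⟨fun x y => ((if x ∈ X ∧ y ∈ Y ∧ x ≠ y then (1 : ℝ) else 0) + R x y)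
    / (X.card * Y.card), fun x y => div_nonneg (h0 x y) (by positivity), ?_, ?_, ?_⟩
  · intro x; simp [hd]
  · intro x
    rw [← Finset.sum_div, Finset.sum_add_distrib, hr, cnt]
    split_ifs
    · field_simp
    · simp
  · intro y
    have e : (∑ x, if x ∈ X ∧ y ∈ Y ∧ x ≠ y then (1:ℝ) else 0)
        = ∑ x, if y ∈ Y ∧ x ∈ X ∧ y ≠ x then (1:ℝ) else 0 := by
      refine Finset.sum_congr rfl fun x _ => if_congr ?_ rfl rfl
      rw [ne_comm]; tauto
    rw [← Finset.sum_div, Finset.sum_add_distrib, hc, e, Finset.inter_comm, cnt]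
    split_ifs
    · field_simp
    · simp

theorem uac_of_bipartite_min_degree_two {V : Type*} [Fintype V] [DecidableEq V] [Nonempty V]
    (G : SimpleGraph V) [DecidableRel G.Adj]
    (hbip : ∃ A : Set V, ∀ x y : V, G.Adj x y → (x ∈ A ↔ y ∉ A))
    (hdeg : ∀ v : V, 2 ≤ G.degree v) :
    ∃ (T : V × V → V × V → ℝ) (s : V × V → ℝ), IsUAC G T s := by
  classical
  obtain ⟨A, hA⟩ := hbip
  choose P h0 hd hr hc using fun x y : V =>
    exists_coupling (G.neighborFinset x) (G.neighborFinset y) (hdeg x) (hdeg y)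
  simp only [SimpleGraph.mem_neighborFinset, SimpleGraph.card_neighborFinset_eq_degree] at hr hc
  have hsupp : ∀ x y x' y', 0 < P x y x' y' → G.Adj x x' ∧ G.Adj y y' ∧ x' ≠ y' := by
    intro x y x' y' h
    refine ⟨?_, ?_, ?_⟩
    · by_contra hn
      have h1 := hr x y x'
      rw [if_neg hn, Finset.sum_eq_zero_iff_of_nonneg (fun _ _ => h0 _ _ _ _)] at h1
      exact h.ne' (h1 y' (Finset.mem_univ _))
    · by_contra hn
      have h1 := hc x y y'
      rw [if_neg hn, Finset.sum_eq_zero_iff_of_nonneg (fun _ _ => h0 _ _ _ _)] at h1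
      exact h.ne' (h1 x' (Finset.mem_univ _))
    · rintro rfl
      exact h.ne' (hd x y x')
  let T : V × V → V × V → ℝ := fun p q => P p.1 p.2 q.1 q.2
  have hT1 : ∀ p, ∑ q, T p q = 1 := by
    intro p
    rw [Fintype.sum_prod_type]
    simp only [T, hr]
    rw [← Finset.sum_filter, Finset.sum_const, nsmul_eq_mul,
      ← SimpleGraph.neighborFinset_eq_filter, SimpleGraph.card_neighborFinset_eq_degree,
      mul_one_div, div_self]
    have := hdeg p.1
    exact_mod_cast (by omega : G.degree p.1 ≠ 0)
  let S : V × V → Prop := fun p => p.1 ≠ p.2 ∧ (p.1 ∈ A ↔ p.2 ∈ A)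
  have hclosed : ∀ p q, S p → ¬ S q → T p q = 0 := by
    rintro ⟨x, y⟩ ⟨x', y'⟩ ⟨_, hp⟩ hq
    by_contra hne
    obtain ⟨h1, h2, h3⟩ := hsupp x y x' y' (lt_of_le_of_ne (h0 _ _ _ _) (Ne.symm hne))
    apply hq
    have := hA _ _ h1
    have := hA _ _ h2
    exact ⟨h3, by dsimp only at *; tauto⟩
  have hS : Nonempty {p // S p} := by
    obtain ⟨v⟩ := ‹Nonempty V›
    obtain ⟨a, ha, b, hb, hab⟩ := Finset.one_lt_card.1
      (by have := hdeg v; rw [← SimpleGraph.card_neighborFinset_eq_degree] at this; omega :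
        1 < (G.neighborFinset v).card)
    rw [SimpleGraph.mem_neighborFinset] at ha hb
    have := hA _ _ ha
    have := hA _ _ hb
    exact ⟨⟨(a, b), hab, by dsimp only; tauto⟩⟩
  have ext0 : ∀ f : V × V → ℝ, (∀ p, ¬ S p → f p = 0) → ∑ p, f p = ∑ p : {p // S p}, f p := by
    intro f hf
    rw [← Finset.sum_subtype (univ.filter S) (by simp) f]
    symm
    refine Finset.sum_subset (Finset.subset_univ _) fun p _ hp => hf p ?_
    simpa using hp
  obtain ⟨s, s0, s1, s2⟩ := exists_stat (fun p q : {p // S p} => T p q)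
    (fun p q => h0 _ _ _ _) (fun p => by
      rw [← ext0 _ (fun q hq => hclosed p q p.2 hq)]; exact hT1 p)
  let s' : V × V → ℝ := fun p => if h : S p then s ⟨p, h⟩ else 0
  have s'n : ∀ p, ¬ S p → s' p = 0 := fun p hp => dif_neg hp
  have s'p : ∀ p : {p // S p}, s' p = s p := fun p => dif_pos p.2
  have s'S : ∀ p, 0 < s' p → S p := fun p hp => by
    by_contra h
    exact hp.ne' (s'n p h)
  refine ⟨T, s', fun p q => h0 _ _ _ _, hT1, ?_, ?_, ?_, ?_, ?_, ?_⟩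
  · intro p
    by_cases h : S p
    · rw [s'p ⟨p, h⟩]; exact s0 _
    · rw [s'n p h]
  · rw [ext0 _ s'n, ← s1]
    exact Finset.sum_congr rfl fun p _ => s'p p
  · intro q
    rw [ext0 _ (fun p hp => by rw [s'n p hp, zero_mul])]
    simp only [s'p]
    by_cases h : S q
    · rw [s'p ⟨q, h⟩, ← s2]
    · rw [s'n q h]
      exact Finset.sum_eq_zero fun p _ => by rw [hclosed p q p.2 h, mul_zero]
  · intro x
    exact s'n _ fun h => h.1 rfl
  · intro x y x' y' hs hT
    obtain ⟨h1, h2, h3⟩ := hsupp x y x' y' hT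
    refine ⟨?_, h3.symm⟩
    rintro rfl
    have := hA _ _ h1
    have := (s'S _ hs).2
    dsimp only at this
    tauto
  · intro x y _
    exact ⟨hr x y, hc x y⟩
end

section
/- Let n ≥ 4 and let G be a simple graph on n vertices that is regular of degree n − 2 (so every vertex has exactly one non-neighbor). Then G admits a uniform avoidance coupling of two simple random walks. -/
open Finset

/-- For $n ≥ 4$, any $(n-2)$-regular simple graph on $n$ vertices admits a uniform
avoidance coupling of two simple random walks. -/
theorem uac_of_regular_degree_sub_two {V : Type*} [Fintype V] [DecidableEq V]
    (G : SimpleGraph V) [DecidableRel G.Adj]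
    (n : ℕ) (hn : 4 ≤ n) (hcard : Fintype.card V = n)
    (hreg : G.IsRegularOfDegree (n - 2)) :
    ∃ (T : V × V → V × V → ℝ) (s : V × V → ℝ), IsUAC G T s := by
  have hex : ∀ v : V, ∃ w : V, ∀ u, Gᶜ.Adj v u ↔ u = w := by
    intro v
    have h1 : Gᶜ.degree v = 1 := by
      rw [SimpleGraph.degree_compl, hreg v, hcard]; omega
    rw [← SimpleGraph.card_neighborFinset_eq_degree, Finset.card_eq_one] at h1
    obtain ⟨w, hw⟩ := h1
    refine ⟨w, fun u => ?_⟩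
    rw [← SimpleGraph.mem_neighborFinset, hw, Finset.mem_singleton]
  choose σ hσ using hex
  have hne : ∀ v, σ v ≠ v := fun v => ((hσ v (σ v)).2 rfl).ne.symm
  have hinv : ∀ v, σ (σ v) = v := fun v =>
    ((hσ (σ v) v).1 ((hσ v (σ v)).2 rfl).symm).symm
  have hadj : ∀ v u, G.Adj v u ↔ u ≠ v ∧ u ≠ σ v := by
    intro v u
    have := hσ v u
    rw [SimpleGraph.compl_adj] at this
    constructor
    · intro h
      exact ⟨h.ne.symm, fun e => (this.2 e).2 h⟩
    · rintro ⟨h1, h2⟩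
      by_contra h
      exact h2 (this.1 ⟨h1.symm, h⟩)
  have hd : ((n - 2 : ℕ) : ℝ) ≠ 0 := by
    have : n - 2 ≠ 0 := by omega
    exact_mod_cast this
  have hn0 : (n : ℝ) ≠ 0 := by
    have : n ≠ 0 := by omega
    exact_mod_cast this
  have hsum : ∀ v, ∑ u, (if G.Adj v u then 1 / ((n - 2 : ℕ) : ℝ) else 0) = 1 := by
    intro v
    rw [← Finset.sum_filter, Finset.sum_const, ← SimpleGraph.neighborFinset_eq_filter,
      SimpleGraph.card_neighborFinset_eq_degree, hreg v, nsmul_eq_mul]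
    field_simp
  refine ⟨fun p q => if q.2 = σ q.1 then (if G.Adj p.1 q.1 then 1 / ((n - 2 : ℕ) : ℝ) else 0) else 0,
    fun p => if p.2 = σ p.1 then 1 / (n : ℝ) else 0, ?_, ?_, ?_, ?_, ?_, ?_, ?_, ?_⟩
  · intro p q
    dsimp only
    split_ifs <;> positivity
  · intro p
    rw [Fintype.sum_prod_type]
    simpa using hsum p.1
  · intro p
    dsimp only
    split_ifs <;> positivity
  · rw [Fintype.sum_prod_type]
    simp [hcard, hn0]
  · rintro ⟨a, b⟩
    rw [Fintype.sum_prod_type]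
    by_cases hb : b = σ a
    · have h := hsum a
      simp only [G.adj_comm a] at h
      simp only [hb, if_true, ite_mul, zero_mul, Finset.sum_ite_eq', Finset.sum_ite_eq,
        Finset.mem_univ]
      rw [← Finset.mul_sum, h, mul_one]
    · simp [hb]
  · intro x
    simp [(hne x).symm]
  · intro x y x' y' h1 h2
    have e1 : y = σ x := by
      by_contra h; simp [h] at h1
    have e2 : y' = σ x' := by
      by_contra h; simp [h] at h2
    have e3 : G.Adj x x' := by
      by_contra h; simp [h] at h2
    subst e1 e2
    exact ⟨((hadj _ _).1 e3).2, hne _⟩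
  · intro x y h1
    have e1 : y = σ x := by
      by_contra h; simp [h] at h1
    subst e1
    rw [hreg x, hreg (σ x)]
    refine ⟨fun x' => by simp, fun y' => ?_⟩
    have e : ∀ x', (y' = σ x') ↔ (x' = σ y') := fun x' =>
      ⟨fun h => by rw [h, hinv], fun h => by rw [h, hinv]⟩
    have e4 : G.Adj x (σ y') ↔ G.Adj (σ x) y' := by
      rw [hadj, hadj, hinv]
      constructor
      · rintro ⟨h1, h2⟩
        exact ⟨fun h => h1 (by rw [h, hinv]), fun h => h2 (by rw [h])⟩
      · rintro ⟨h1, h2⟩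
        exact ⟨fun h => h1 (by rw [← h, hinv]), fun h => h2 (by rw [← hinv y', h, hinv])⟩
    simp only [e, Finset.sum_ite_eq', Finset.sum_ite_eq, Finset.mem_univ, if_true, e4]
end

section
/- Let n ≥ 4 and let G be a simple graph on n vertices that is regular of degree n − 3 (so the complement of G is 2-regular, i.e., a disjoint union of cycles). Then G admits a uniform avoidance coupling of two simple random walks. -/
open Finset

theorem exists_orient {V : Type*} [Fintype V] (A : V → V → Prop)
    (hs : ∀ x y, A x y → A y x) (hi : ∀ x, ¬ A x x)
    (hne : ∀ x, ∃ y, A x y)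
    (ho : ∀ x y, A x y → ∃ z, z ≠ x ∧ ∀ w, A y w ↔ w = x ∨ w = z) :
    ∃ σ : Equiv.Perm V, ∀ x y, A x y ↔ y = σ x ∨ x = σ y := by
  classical
  have ho' : ∀ x y, ∃ z, A x y → z ≠ x ∧ ∀ w, A y w ↔ w = x ∨ w = z := by
    intro x y
    by_cases h : A x y
    · obtain ⟨z, hz⟩ := ho x y h
      exact ⟨z, fun _ => hz⟩
    · exact ⟨x, fun h' => absurd h' h⟩
  choose o hO using ho'
  have hadj : ∀ x y, A x y → A y (o x y) := fun x y h => ((hO x y h).2 _).2 (Or.inr rfl)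
  have hoo : ∀ x y, A x y → o (o x y) y = x := by
    intro x y h
    have h1 := hs _ _ (hadj x y h)
    have h2 := hO _ _ h1
    have h3 := (h2.2 x).1 (hs _ _ h)
    have h4 := (hO x y h).1
    rcases h3 with h3 | h3
    · exact absurd h3.symm h4
    · exact h3.symm
  let D := {p : V × V // A p.1 p.2}
  let φ : Equiv.Perm D :=
    { toFun := fun d => ⟨(d.1.2, o d.1.1 d.1.2), hadj _ _ d.2⟩
      invFun := fun d => ⟨(o d.1.2 d.1.1, d.1.1), hs _ _ (hadj _ _ (hs _ _ d.2))⟩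
      left_inv := by
        rintro ⟨⟨x, y⟩, h⟩
        exact Subtype.ext (Prod.ext (hoo x y h) rfl)
      right_inv := by
        rintro ⟨⟨x, y⟩, h⟩
        exact Subtype.ext (Prod.ext rfl (hoo y x (hs _ _ h))) }
  let ρ : D → D := fun d => ⟨(d.1.2, d.1.1), hs _ _ d.2⟩
  have hρφ : ∀ d, ρ (φ d) = φ⁻¹ (ρ d) := fun d => rfl
  have hρφ' : ∀ d, ρ (φ⁻¹ d) = φ (ρ d) := fun d => rfl
  have hρρ : ∀ d, ρ (ρ d) = d := fun d => rfl
  have hpow : ∀ (k : ℤ) d, ρ ((φ ^ k) d) = (φ ^ (-k)) (ρ d) := by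
    intro k
    induction k using Int.induction_on with
    | zero => intro d; simp
    | succ i ih =>
      intro d
      rw [zpow_add_one, Equiv.Perm.mul_apply, ih, hρφ, ← Equiv.Perm.mul_apply, ← zpow_sub_one]
      congr 2; ring
    | pred i ih =>
      intro d
      rw [zpow_sub_one, Equiv.Perm.mul_apply, ih, hρφ', ← Equiv.Perm.mul_apply, ← zpow_add_one]
      congr 2; ring
  have hfix : ∀ d, ρ d ≠ d := by
    rintro ⟨⟨x, y⟩, h⟩ he
    have : y = x := congrArg (fun d : D => d.1.1) he
    exact hi x (this ▸ h)
  have hfix2 : ∀ d, ρ d ≠ φ d := by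
    rintro ⟨⟨x, y⟩, h⟩ he
    have : x = o x y := congrArg (fun d : D => d.1.2) he
    exact (hO x y h).1 this.symm
  have hnsc : ∀ d, ¬ φ.SameCycle d (ρ d) := by
    rintro d ⟨K, hK⟩
    have key : ∀ m : ℤ, ρ ((φ ^ m) d) = (φ ^ (K - m)) d := by
      intro m
      rw [hpow, ← hK, ← Equiv.Perm.mul_apply, ← zpow_add]
      congr 2; ring
    rcases Int.even_or_odd' K with ⟨m, rfl | rfl⟩
    · apply hfix ((φ ^ m) d)
      rw [key]; congr 2; ring
    · apply hfix2 ((φ ^ m) d)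
      rw [key, ← Equiv.Perm.mul_apply, ← zpow_one_add]; congr 2; ring
  let S : Setoid D := Equiv.Perm.SameCycle.setoid φ
  let e := Fintype.equivFin (Quotient S)
  let c : D → ℕ := fun d => (e (Quotient.mk S d)).1
  have hc : ∀ d d', c d = c d' ↔ φ.SameCycle d d' := by
    intro d d'
    constructor
    · intro h
      exact Quotient.exact (e.injective (Fin.ext h))
    · intro h
      have : Quotient.mk S d = Quotient.mk S d' := Quotient.sound h
      simp only [c, this]
  let P : D → Prop := fun d => c d < c (ρ d)
  have hPφ : ∀ d, P (φ d) ↔ P d := by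
    intro d
    have h1 : c (φ d) = c d := (hc _ _).2 (Equiv.Perm.sameCycle_apply_left.2 (Equiv.Perm.SameCycle.refl _ _))
    have h2 : c (ρ (φ d)) = c (ρ d) := by
      rw [hρφ]
      exact (hc _ _).2 (⟨1, by simp⟩)
    simp only [P, h1, h2]
  have hPρ : ∀ d, P (ρ d) ↔ ¬ P d := by
    intro d
    have : c d ≠ c (ρ d) := fun h => hnsc d ((hc _ _).1 h)
    simp only [P, hρρ]
    omega
  let Q : V → V → Prop := fun x y => ∃ h : A x y, P ⟨(x, y), h⟩
  have hQA : ∀ x y, A x y → (Q y x ↔ ¬ Q x y) := by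
    intro x y h
    have := hPρ ⟨(x, y), h⟩
    constructor
    · rintro ⟨h1, h2⟩ ⟨h3, h4⟩
      exact this.1 h2 h4
    · intro h1
      exact ⟨hs _ _ h, this.2 fun h2 => h1 ⟨h, h2⟩⟩
  have hQo : ∀ x y, A x y → (Q y (o x y) ↔ Q x y) := by
    intro x y h
    have := hPφ ⟨(x, y), h⟩
    constructor
    · rintro ⟨h1, h2⟩
      exact ⟨h, this.1 h2⟩
    · rintro ⟨h1, h2⟩
      exact ⟨hadj _ _ h, this.2 h2⟩
  have hex : ∀ x, ∃ y, Q x y := by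
    intro x
    obtain ⟨y, hy⟩ := hne x
    by_cases h : Q x y
    · exact ⟨y, h⟩
    · exact ⟨o y x, (hQo y x (hs _ _ hy)).2 ((hQA x y hy).2 h)⟩
  choose f hf using hex
  have huniq : ∀ x y, Q x y → y = f x := by
    intro x y h
    have hA : A x y := h.1
    have h1 := ((hO y x (hs _ _ hA)).2 (f x)).1 (hf x).1
    rcases h1 with h1 | h1
    · exact h1.symm
    · have h2 := hf x
      rw [h1, hQo _ _ (hs _ _ hA)] at h2
      exact absurd h ((hQA x y hA).1 h2)
  have hinj : Function.Injective f := by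
    intro x x' he
    have h1 := hf x
    have h2 := hf x'
    rw [← he] at h2
    have h3 := ((hO x (f x) h1.1).2 x').1 (hs _ _ h2.1)
    rcases h3 with h3 | h3
    · exact h3.symm
    · have h4 := (hQo _ _ h1.1).2 h1
      rw [← h3] at h4
      exact absurd h2 ((hQA _ _ h2.1).1 h4)
  refine ⟨Equiv.ofBijective f (Finite.injective_iff_bijective.1 hinj), ?_⟩
  intro x y
  simp only [Equiv.ofBijective_apply]
  constructor
  · intro h
    by_cases hq : Q x y
    · exact Or.inl (huniq _ _ hq)
    · exact Or.inr (huniq _ _ ((hQA _ _ h).2 hq))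
  · rintro (h | h)
    · rw [h]; exact (hf x).1
    · rw [h]; exact hs _ _ (hf y).1

/-- For $n ≥ 4$, any $(n-3)$-regular simple graph on $n$ vertices admits a uniform
avoidance coupling of two simple random walks. -/
theorem uac_of_regular_degree_sub_three {V : Type*} [Fintype V] [DecidableEq V]
    (G : SimpleGraph V) [DecidableRel G.Adj]
    (n : ℕ) (hn : 4 ≤ n) (hcard : Fintype.card V = n)
    (hreg : G.IsRegularOfDegree (n - 3)) :
    ∃ (T : V × V → V × V → ℝ) (s : V × V → ℝ), IsUAC G T s := by
  have hdeg : ∀ x, (Gᶜ.neighborFinset x).card = 2 := by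
    intro x
    rw [SimpleGraph.card_neighborFinset_eq_degree, SimpleGraph.degree_compl, hreg.degree_eq, hcard]
    omega
  obtain ⟨σ, hσ⟩ := exists_orient Gᶜ.Adj (fun x y h => h.symm) (fun x => Gᶜ.loopless.irrefl x)
    (by
      intro x
      obtain ⟨y, hy⟩ := Finset.card_pos.1 (by rw [hdeg x]; norm_num : 0 < (Gᶜ.neighborFinset x).card)
      exact ⟨y, by simpa using hy⟩)
    (by
      intro x y h
      obtain ⟨a, b, hab, he⟩ := Finset.card_eq_two.1 (hdeg y)
      have hm : ∀ w, Gᶜ.Adj y w ↔ w = a ∨ w = b := by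
        intro w
        rw [← SimpleGraph.mem_neighborFinset, he]; simp
      rcases (hm x).1 h.symm with rfl | rfl
      · exact ⟨b, hab.symm, hm⟩
      · exact ⟨a, hab, fun w => by rw [hm w, or_comm]⟩)
  have hcσ : ∀ x, Gᶜ.Adj x (σ x) := fun x => (hσ _ _).2 (Or.inl rfl)
  have hnσ : ∀ x, σ x ≠ x := fun x => (hcσ x).ne'
  have haσ : ∀ x, ¬ G.Adj x (σ x) := fun x => ((SimpleGraph.compl_adj _ _ _).1 (hcσ x)).2
  have hcaut : ∀ x y, Gᶜ.Adj (σ x) (σ y) ↔ Gᶜ.Adj x y := by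
    intro x y
    rw [hσ, hσ]; simp
  have haut : ∀ x y, G.Adj (σ x) (σ y) ↔ G.Adj x y := by
    intro x y
    have h := hcaut x y
    rw [SimpleGraph.compl_adj, SimpleGraph.compl_adj, σ.injective.ne_iff] at h
    by_cases hxy : x = y
    · subst hxy; simp
    · tauto
  have hd0 : ((n - 3 : ℕ) : ℝ) ≠ 0 := by
    have : n - 3 ≠ 0 := by omega
    exact_mod_cast this
  have hn0 : (n : ℝ) ≠ 0 := by
    have : n ≠ 0 := by omega
    exact_mod_cast this
  have hsum : ∀ x, ∑ y, (if G.Adj x y then 1 / ((n - 3 : ℕ) : ℝ) else 0) = 1 := by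
    intro x
    rw [← Finset.sum_filter, ← SimpleGraph.neighborFinset_eq_filter, Finset.sum_const,
      SimpleGraph.card_neighborFinset_eq_degree, hreg.degree_eq, nsmul_eq_mul]
    field_simp
  have hrow : ∀ x x' : V, (∑ y' : V, (if y' = σ x' then
      (if G.Adj x x' then 1 / ((n - 3 : ℕ) : ℝ) else 0) else 0)) =
      if G.Adj x x' then 1 / ((n - 3 : ℕ) : ℝ) else 0 := by
    intro x x'
    simp
  refine ⟨fun p q => if q.2 = σ q.1 then
      (if G.Adj p.1 q.1 then 1 / ((n - 3 : ℕ) : ℝ) else 0) else 0,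
    fun p => if p.2 = σ p.1 then 1 / (n : ℝ) else 0, ?_, ?_, ?_, ?_, ?_, ?_, ?_, ?_⟩
  · intro p q
    dsimp only
    split_ifs <;> positivity
  · rintro ⟨x, y⟩
    rw [Fintype.sum_prod_type]
    simp only [hrow]
    exact hsum x
  · intro p
    dsimp only
    split_ifs <;> positivity
  · rw [Fintype.sum_prod_type]
    simp [hcard, hn0]
  · rintro ⟨x', y'⟩
    rw [Fintype.sum_prod_type]
    by_cases h : y' = σ x'
    · simp only [h, if_true, ite_mul, zero_mul, Finset.sum_ite_eq', Finset.sum_ite_eq,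
        Finset.mem_univ]
      rw [← Finset.mul_sum]
      have := hsum x'
      simp only [G.adj_comm x'] at this
      rw [this, mul_one]
    · simp [h]
  · intro x
    simp [(hnσ x).symm]
  · intro x y x' y' h1 h2
    dsimp only at h1 h2
    split_ifs at h1 h2 with h3 h4 h5
    all_goals first | exact absurd h1 (lt_irrefl _) | exact absurd h2 (lt_irrefl _) | skip
    refine ⟨?_, ?_⟩
    · rintro rfl
      rw [h3] at h5
      exact haσ x h5
    · rw [h4]; exact hnσ x'
  · intro x y h1
    dsimp only at h1
    split_ifs at h1 with h3
    · subst h3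
      refine ⟨?_, ?_⟩
      · intro x'
        rw [hreg.degree_eq]
        exact hrow x x'
      · intro y'
        rw [hreg.degree_eq]
        obtain ⟨z, rfl⟩ := σ.surjective y'
        simp only [haut, σ.injective.eq_iff]
        simp
    · exact absurd h1 (lt_irrefl _)
end

section
/- Let G be a finite simple graph that is regular of degree k ≥ 1. Then G admits a uniform avoidance coupling of two simple random walks if and only if G admits a minimum-entropy uniform avoidance coupling of two simple random walks. -/
open Finset

/-- A minimum-entropy UAC on a `k`-regular graph: at every state `(x, y)` of
positive stationary probability there is a bijection `m` from `N(x)` to `N(y)`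
such that the transition puts mass `1/k` on each pair `(x', m x')` with
`x' ∈ N(x)`, and mass 0 elsewhere. -/
def IsMinEntropyUAC {V : Type*} [Fintype V] [DecidableEq V]
    (G : SimpleGraph V) [DecidableRel G.Adj] (k : ℕ)
    (T : V × V → V × V → ℝ) (s : V × V → ℝ) : Prop :=
  IsUAC G T s ∧
  ∀ x y : V, 0 < s (x, y) →
    ∃ m : V → V, Set.BijOn m (G.neighborSet x) (G.neighborSet y) ∧
      ∀ x' y' : V, T (x, y) (x', y') =
        if G.Adj x x' ∧ y' = m x' then 1 / (k : ℝ) else 0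

theorem exists_stationary_aux {ι : Type*} [Fintype ι] [DecidableEq ι] [Nonempty ι]
    (P : ι → ι → ℝ) (h0 : ∀ i j, 0 ≤ P i j) (h1 : ∀ i, ∑ j, P i j = 1) :
    ∃ s : ι → ℝ, (∀ i, 0 ≤ s i) ∧ ∑ i, s i = 1 ∧ ∀ j, ∑ i, s i * P i j = s j := by
  have hdet : (Matrix.of P - 1 : Matrix ι ι ℝ).det = 0 := by
    rw [← Matrix.exists_mulVec_eq_zero_iff]
    refine ⟨fun _ => 1, ?_, ?_⟩
    · intro h
      have := congrFun h (Classical.arbitrary ι)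
      simp at this
    · funext i
      rw [Matrix.sub_mulVec, Matrix.one_mulVec]
      simp [Matrix.mulVec, dotProduct, h1]
  rw [← Matrix.exists_vecMul_eq_zero_iff] at hdet
  obtain ⟨v, hv, hv2⟩ := hdet
  have hst : ∀ j, ∑ i, v i * P i j = v j := by
    intro j
    have := congrFun hv2 j
    rw [Matrix.vecMul_sub, Matrix.vecMul_one] at this
    simp [Matrix.vecMul, dotProduct] at this
    linarith
  have hle : ∀ j, |v j| ≤ ∑ i, |v i| * P i j := by
    intro j
    rw [← hst j]
    refine (Finset.abs_sum_le_sum_abs _ _).trans (le_of_eq ?_)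
    refine Finset.sum_congr rfl fun i _ => ?_
    rw [abs_mul, abs_of_nonneg (h0 i j)]
  have hsum : ∑ j, |v j| = ∑ j, ∑ i, |v i| * P i j := by
    rw [Finset.sum_comm]
    refine Finset.sum_congr rfl fun i _ => ?_
    rw [← Finset.mul_sum, h1, mul_one]
  have heq := (Finset.sum_eq_sum_iff_of_le (fun j _ => hle j)).1 hsum
  have hpos : 0 < ∑ j, |v j| := by
    obtain ⟨i, hi⟩ := Function.ne_iff.1 hv
    exact Finset.sum_pos' (fun _ _ => abs_nonneg _) ⟨i, Finset.mem_univ _, abs_pos.2 hi⟩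
  refine ⟨fun i => |v i| / ∑ j, |v j|, fun i => by positivity, ?_, fun j => ?_⟩
  · rw [← Finset.sum_div, div_self hpos.ne']
  · show ∑ i, |v i| / (∑ j, |v j|) * P i j = |v j| / ∑ j, |v j|
    rw [div_eq_mul_inv |v j|, heq j (Finset.mem_univ _), Finset.sum_mul]
    refine Finset.sum_congr rfl fun i _ => ?_
    ring

theorem exists_matching_aux {V : Type*} [Fintype V] [DecidableEq V]
    (A B : Finset V) (hAB : A.card = B.card) (c : ℝ) (hc : 0 < c) (M : V → V → ℝ)
    (h0 : ∀ x y, 0 ≤ M x y)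
    (hr : ∀ x, ∑ y, M x y = if x ∈ A then c else 0)
    (hcol : ∀ y, ∑ x, M x y = if y ∈ B then c else 0) :
    ∃ m : V → V, Set.BijOn m A B ∧ ∀ x ∈ A, 0 < M x (m x) := by
  classical
  let t : A → Finset V := fun x => Finset.univ.filter fun y => 0 < M x y
  have hall : ∀ S : Finset A, S.card ≤ (S.biUnion t).card := by
    intro S
    have e1 : (S.card : ℝ) * c = ∑ x ∈ S, ∑ y ∈ S.biUnion t, M x y := by
      rw [← nsmul_eq_mul, ← Finset.sum_const]
      refine Finset.sum_congr rfl fun x hx => ?_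
      have := hr x
      rw [if_pos x.2] at this
      rw [← this]
      symm
      refine Finset.sum_subset (Finset.subset_univ _) fun y _ hy => ?_
      by_contra hne
      exact hy (Finset.mem_biUnion.2 ⟨x, hx, by
        simp only [t, Finset.mem_filter, Finset.mem_univ, true_and]
        exact lt_of_le_of_ne (h0 _ _) (Ne.symm hne)⟩)
    have e2 : ∑ x ∈ S, ∑ y ∈ S.biUnion t, M x y ≤ ((S.biUnion t).card : ℝ) * c := by
      rw [Finset.sum_comm, ← nsmul_eq_mul, ← Finset.sum_const]
      refine Finset.sum_le_sum fun y _ => ?_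
      calc ∑ x ∈ S, M x y = ∑ x ∈ S.map (Function.Embedding.subtype _), M x y := by
            rw [Finset.sum_map]; rfl
        _ ≤ ∑ x, M x y := Finset.sum_le_sum_of_subset_of_nonneg (Finset.subset_univ _)
            fun _ _ _ => h0 _ _
        _ ≤ c := by rw [hcol]; split_ifs <;> linarith
    have : (S.card : ℝ) ≤ ((S.biUnion t).card : ℝ) :=
      le_of_mul_le_mul_right (e1.trans_le e2) hc
    exact_mod_cast this
  obtain ⟨f, hf, hft⟩ := (Finset.all_card_le_biUnion_card_iff_exists_injective t).1 hall
  let m : V → V := fun x => if h : x ∈ A then f ⟨x, h⟩ else x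
  have hm : ∀ x ∈ A, 0 < M x (m x) := by
    intro x hx
    have := hft ⟨x, hx⟩
    simp only [t, Finset.mem_filter, Finset.mem_univ, true_and] at this
    simpa [m, hx] using this
  have hmaps : ∀ x ∈ A, m x ∈ B := by
    intro x hx
    by_contra hB
    have h1 := hcol (m x)
    rw [if_neg hB] at h1
    have h2 := Finset.single_le_sum (f := fun x' => M x' (m x)) (fun i _ => h0 i _)
      (Finset.mem_univ x)
    have := hm x hx
    linarith
  have hinj : Set.InjOn m A := by
    intro x hx y hy hxy
    have hx' : x ∈ A := hx
    have hy' : y ∈ A := hy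
    simp only [m, hx', hy', dif_pos] at hxy
    exact congrArg Subtype.val (hf hxy)
  refine ⟨m, ⟨fun x hx => hmaps x hx, hinj, ?_⟩, hm⟩
  exact Finset.surjOn_of_injOn_of_card_le m (fun x hx => hmaps x hx) hinj hAB.ge

/-- A finite `k`-regular graph ($k ≥ 1$) admits a uniform avoidance coupling of two
simple random walks if and only if it admits a minimum-entropy one. -/
theorem regular_uac_iff_min_entropy_uac {V : Type*} [Fintype V] [DecidableEq V]
    (G : SimpleGraph V) [DecidableRel G.Adj]
    (k : ℕ) (hk : 1 ≤ k) (hreg : G.IsRegularOfDegree k) :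
    (∃ (T : V × V → V × V → ℝ) (s : V × V → ℝ), IsUAC G T s) ↔
    (∃ (T : V × V → V × V → ℝ) (s : V × V → ℝ), IsMinEntropyUAC G k T s) := by
  constructor
  swap
  · rintro ⟨T, s, h, -⟩
    exact ⟨T, s, h⟩
  rintro ⟨T, s, hT0, hT1, hs0, hs1, hst, hnc, hav, huf⟩
  classical
  have hkpos : (0 : ℝ) < 1 / (k : ℝ) := by
    have : (0 : ℝ) < k := by exact_mod_cast hk
    positivity
  have hkne : (k : ℝ) ≠ 0 := by
    have : (0 : ℝ) < k := by exact_mod_cast hk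
    exact this.ne'
  obtain ⟨p0, hp0⟩ : ∃ p, 0 < s p := by
    by_contra! h
    have : ∑ p, s p ≤ 0 := Finset.sum_nonpos fun p _ => h p
    linarith
  have hclosed : ∀ p q, 0 < s p → 0 < T p q → 0 < s q := by
    intro p q hp hq
    rw [← hst q]
    exact Finset.sum_pos' (fun i _ => mul_nonneg (hs0 i) (hT0 i q))
      ⟨p, Finset.mem_univ _, mul_pos hp hq⟩
  have hmatch : ∀ p : V × V, ∃ m : V → V, 0 < s p →
      Set.BijOn m (G.neighborSet p.1) (G.neighborSet p.2) ∧
      ∀ x', G.Adj p.1 x' → 0 < T p (x', m x') := by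
    rintro ⟨x, y⟩
    by_cases hp : 0 < s (x, y)
    · obtain ⟨hr, hc⟩ := huf x y hp
      obtain ⟨m, hm, hm2⟩ := exists_matching_aux (G.neighborFinset x) (G.neighborFinset y)
        (by rw [G.card_neighborFinset_eq_degree, G.card_neighborFinset_eq_degree, hreg x, hreg y])
        (1 / (k : ℝ)) hkpos (fun x' y' => T (x, y) (x', y')) (fun _ _ => hT0 _ _)
        (fun x' => by rw [hr x', hreg x]; simp)
        (fun y' => by rw [hc y', hreg y]; simp)
      refine ⟨m, fun _ => ⟨?_, fun x' hx' => hm2 x' (by simpa using hx')⟩⟩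
      simpa using hm
    · exact ⟨id, fun h => absurd h hp⟩
  choose m hm using hmatch
  let T' : V × V → V × V → ℝ := fun p q =>
    if 0 < s p then (if G.Adj p.1 q.1 ∧ q.2 = m p q.1 then 1 / (k : ℝ) else 0)
    else if q = p0 then 1 else 0
  have hT'pos : ∀ p, 0 < s p → ∀ q, T' p q =
      if G.Adj p.1 q.1 ∧ q.2 = m p q.1 then 1 / (k : ℝ) else 0 := by
    intro p hp q
    simp only [T', if_pos hp]
  have hrow : ∀ p, 0 < s p → ∀ x', ∑ y', T' p (x', y') =
      if G.Adj p.1 x' then 1 / (k : ℝ) else 0 := by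
    intro p hp x'
    simp only [hT'pos p hp]
    by_cases h : G.Adj p.1 x' <;> simp [h]
  have hcol : ∀ p, 0 < s p → ∀ y', ∑ x', T' p (x', y') =
      if G.Adj p.2 y' then 1 / (k : ℝ) else 0 := by
    intro p hp y'
    simp only [hT'pos p hp]
    obtain ⟨⟨hmaps, hinj, hsurj⟩, -⟩ := hm p hp
    by_cases h : G.Adj p.2 y'
    · obtain ⟨x₀, hx₀, hx₀'⟩ := hsurj h
      rw [if_pos h, Finset.sum_eq_single x₀]
      · exact if_pos ⟨hx₀, hx₀'.symm⟩
      · intro b _ hb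
        refine if_neg fun hh => hb (hinj hh.1 hx₀ ?_)
        rw [hx₀', hh.2]
      · simp
    · rw [if_neg h]
      refine Finset.sum_eq_zero fun x' _ => if_neg fun hh => h ?_
      have := hmaps hh.1
      rw [hh.2]
      exact this
  have hT'0 : ∀ p q, 0 ≤ T' p q := by
    intro p q
    simp only [T']
    split_ifs <;> first | exact hkpos.le | norm_num
  have hT'1 : ∀ p, ∑ q, T' p q = 1 := by
    intro p
    by_cases hp : 0 < s p
    · rw [Fintype.sum_prod_type]
      simp only [hrow p hp]
      rw [← Finset.sum_filter, Finset.sum_const, ← G.neighborFinset_eq_filter,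
        G.card_neighborFinset_eq_degree, hreg p.1, nsmul_eq_mul]
      field_simp
    · simp [T', hp]
  have hT'T : ∀ p q, 0 < s p → 0 < T' p q → 0 < T p q := by
    intro p q hp hq
    rw [hT'pos p hp] at hq
    split_ifs at hq with hh
    · have := (hm p hp).2 q.1 hh.1
      rw [← hh.2] at this
      exact this
    · exact absurd hq (lt_irrefl _)
  haveI : Nonempty (V × V) := ⟨p0⟩
  obtain ⟨s', hs'0, hs'1, hs't⟩ := exists_stationary_aux T' hT'0 hT'1
  have hsupp : ∀ p, 0 < s' p → 0 < s p := by
    intro q hq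
    by_contra hsq
    have : s' q = 0 := by
      rw [← hs't q]
      refine Finset.sum_eq_zero fun p _ => ?_
      suffices T' p q = 0 by rw [this, mul_zero]
      by_contra hne
      have hpos : 0 < T' p q := lt_of_le_of_ne (hT'0 p q) (Ne.symm hne)
      by_cases hp : 0 < s p
      · exact hsq (hclosed p q hp (hT'T p q hp hpos))
      · have hq0 : q ≠ p0 := fun h => hsq (h ▸ hp0)
        exact hne (by simp [T', hp, hq0])
    linarith
  refine ⟨T', s', ⟨hT'0, hT'1, hs'0, hs'1, hs't, ?_, ?_, ?_⟩, ?_⟩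
  · intro x
    by_contra hne
    have := hsupp _ (lt_of_le_of_ne (hs'0 _) (Ne.symm hne))
    rw [hnc] at this
    exact lt_irrefl _ this
  · intro x y x' y' h1 h2
    exact hav x y x' y' (hsupp _ h1) (hT'T _ _ (hsupp _ h1) h2)
  · intro x y h
    rw [hreg x, hreg y]
    exact ⟨hrow _ (hsupp _ h), hcol _ (hsupp _ h)⟩
  · intro x y h
    exact ⟨m (x, y), (hm _ (hsupp _ h)).1, fun x' y' => hT'pos _ (hsupp _ h) (x', y')⟩
end

section
/- Let G be a connected, non-complete strongly regular graph with parameters (n, k, λ, μ) such that 2·max(λ, μ) ≤ k or 2λ < k. Then the forbidden set F of G equals F_0 = {(x, y) ∈ V × V : x = y or x ~ y}; that is, the only forbidden states are the diagonal pairs and the adjacent pairs. -/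
open Finset

section helpers

variable {V : Type*} [Fintype V] [DecidableEq V] (G : SimpleGraph V) [DecidableRel G.Adj]

lemma aux_common {lam : ℕ} (h : ∀ v w : V, G.Adj v w → Fintype.card (G.commonNeighbors v w) = lam)
    {v w : V} (hvw : G.Adj v w) (R : Finset V) (hR : ∀ r ∈ R, G.Adj v r ∧ G.Adj w r) :
    R.card ≤ lam := by
  rw [← h v w hvw, ← Set.toFinset_card]
  apply Finset.card_le_card
  intro r hr
  rw [Set.mem_toFinset, SimpleGraph.mem_commonNeighbors]
  exact hR r hr

lemma aux_deg {k : ℕ} (h : G.IsRegularOfDegree k) (v : V) (R : Finset V)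
    (hR : ∀ r ∈ R, G.Adj v r) : R.card ≤ k := by
  rw [← h v, ← SimpleGraph.card_neighborFinset_eq_degree]
  apply Finset.card_le_card
  intro r hr
  rw [SimpleGraph.mem_neighborFinset]
  exact hR r hr

lemma aux_meet {n k lam mu : ℕ} (hsrg : G.IsSRGWith n k lam mu) {x y : V} (hne : x ≠ y)
    (hna : ¬ G.Adj x y) (S T : Finset V) (hS : ∀ s ∈ S, G.Adj x s) (hT : ∀ t ∈ T, G.Adj y t)
    (hST : ∀ s ∈ S, ∀ t ∈ T, s = t ∨ G.Adj s t) (hTn : T.Nonempty)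
    (hcard : k + 1 ≤ S.card + T.card) : ∃ c ∈ T, G.Adj x c := by
  by_contra! hcon
  obtain ⟨t, ht⟩ := hTn
  have hmu : ∀ v w : V, v ≠ w → ¬ G.Adj v w →
      (G.neighborFinset v ∩ G.neighborFinset w).card = mu := by
    intro v w h1 h2
    rw [← hsrg.of_not_adj h1 h2, ← Set.toFinset_card]
    congr 1
    ext r
    simp [SimpleGraph.mem_commonNeighbors]
  have h1 : S.card ≤ mu := by
    rw [← hmu x t (by rintro rfl; exact hna (hT _ ht).symm) (hcon t ht)]
    apply Finset.card_le_card
    intro s hs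
    rw [mem_inter, SimpleGraph.mem_neighborFinset, SimpleGraph.mem_neighborFinset]
    refine ⟨hS s hs, ?_⟩
    rcases hST s hs t ht with rfl | h
    · exact absurd (hS _ hs) (hcon _ ht)
    · exact h.symm
  have h2 : T.card + mu ≤ k := by
    rw [← hmu x y hne hna, ← Finset.card_union_of_disjoint]
    · apply aux_deg G hsrg.regular y
      intro r hr
      rw [mem_union, mem_inter, SimpleGraph.mem_neighborFinset, SimpleGraph.mem_neighborFinset] at hr
      rcases hr with h | h
      · exact hT r h
      · exact h.2
    · rw [Finset.disjoint_left]
      intro r hr hr2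
      rw [mem_inter, SimpleGraph.mem_neighborFinset] at hr2
      exact hcon r hr hr2.1
  omega

lemma aux_size {n k lam mu : ℕ} (hsrg : G.IsSRGWith n k lam mu) {x : V}
    (S T : Finset V) (hS : ∀ s ∈ S, G.Adj x s)
    (hST : ∀ s ∈ S, ∀ t ∈ T, s = t ∨ G.Adj s t) {c : V} (hc : c ∈ T) (hxc : G.Adj x c) :
    (S.erase c).card ≤ lam := by
  apply aux_common G hsrg.of_adj hxc
  intro r hr
  rw [mem_erase] at hr
  exact ⟨hS r hr.2, ((hST r hr.2 c hc).resolve_left hr.1).symm⟩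

lemma aux_final {n k lam mu : ℕ} (hsrg : G.IsSRGWith n k lam mu) (hk : 2 * lam ≤ k)
    {x y : V} (hne : x ≠ y)
    (hna : ¬ G.Adj x y) (S T : Finset V) (hS : ∀ s ∈ S, G.Adj x s) (hT : ∀ t ∈ T, G.Adj y t)
    (hST : ∀ s ∈ S, ∀ t ∈ T, s = t ∨ G.Adj s t) 
    (hcard : k + 1 ≤ S.card + T.card) (hTc : T.card = lam + 1)
    {c : V} (hcS : c ∈ S) (hyc : G.Adj y c) : False := by
  have hTS : ∀ s ∈ T, ∀ t ∈ S, s = t ∨ G.Adj s t := fun s hs t ht =>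
    (hST t ht s hs).imp Eq.symm (fun h => h.symm)
  have hmem : ∀ s ∈ S, G.Adj y s → s ∈ T := by
    intro s hs hys
    by_contra hn
    have := aux_size G hsrg T S hT hTS hs hys
    rw [Finset.erase_eq_of_notMem hn] at this
    omega
  have hcT := hmem c hcS hyc
  have hxT : x ∉ T := fun h => hna (hT x h).symm
  have hyT : y ∉ T := fun h => G.loopless.irrefl y (hT y h)
  by_cases hex : ∃ a ∈ S, a ≠ c
  · obtain ⟨a, ha, hac⟩ := hex
    have hadj : G.Adj a c := (hST a ha c hcT).resolve_left hac
    by_cases hya : G.Adj y a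
    · have haT := hmem a ha hya
      have := aux_common G hsrg.of_adj hadj (insert x (insert y ((T.erase c).erase a))) (by
        intro r hr
        simp only [mem_insert, mem_erase] at hr
        rcases hr with rfl | rfl | ⟨h1, h2, h3⟩
        · exact ⟨(hS _ ha).symm, (hS _ hcS).symm⟩
        · exact ⟨hya.symm, hyc.symm⟩
        · exact ⟨(hST a ha r h3).resolve_left (Ne.symm h1),
            (hST c hcS r h3).resolve_left (Ne.symm h2)⟩)
      rw [card_insert_of_notMem (by simp [hne, hxT]), card_insert_of_notMem (by simp [hyT]),
        card_erase_of_mem (by simp [hac, haT]), card_erase_of_mem hcT] at this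
      omega
    · have haT : a ∉ T := fun h => hya (hT a h)
      have := aux_common G hsrg.of_adj hadj (insert x (T.erase c)) (by
        intro r hr
        simp only [mem_insert, mem_erase] at hr
        rcases hr with rfl | ⟨h2, h3⟩
        · exact ⟨(hS _ ha).symm, (hS _ hcS).symm⟩
        · exact ⟨(hST a ha r h3).resolve_left (by rintro rfl; exact haT h3),
            (hST c hcS r h3).resolve_left (Ne.symm h2)⟩)
      rw [card_insert_of_notMem (by simp [hxT]), card_erase_of_mem hcT] at this
      omega
  · push Not at hex
    have h1 : S.card ≤ 1 := Finset.card_le_one.2 (fun a ha b hb => (hex a ha).trans (hex b hb).symm)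
    have := aux_deg G hsrg.regular c (insert x (insert y (T.erase c))) (by
        intro r hr
        simp only [mem_insert, mem_erase] at hr
        rcases hr with rfl | rfl | ⟨h2, h3⟩
        · exact (hS _ hcS).symm
        · exact hyc.symm
        · exact (hST c hcS r h3).resolve_left (Ne.symm h2))
    rw [card_insert_of_notMem (by simp [hne, hxT]), card_insert_of_notMem (by simp [hyT]),
        card_erase_of_mem hcT] at this
    omega

lemma aux_key {n k lam mu : ℕ} (hsrg : G.IsSRGWith n k lam mu) (hk : 2 * lam ≤ k)
    {x y : V} (hne : x ≠ y)
    (hna : ¬ G.Adj x y) (S T : Finset V) (hS : ∀ s ∈ S, G.Adj x s) (hT : ∀ t ∈ T, G.Adj y t)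
    (hST : ∀ s ∈ S, ∀ t ∈ T, s = t ∨ G.Adj s t) 
    (hcard : k + 1 ≤ S.card + T.card) : False := by
  have hTS : ∀ s ∈ T, ∀ t ∈ S, s = t ∨ G.Adj s t := fun s hs t ht =>
    (hST t ht s hs).imp Eq.symm (fun h => h.symm)
  have hSk := aux_deg G hsrg.regular x S hS
  have hTk := aux_deg G hsrg.regular y T hT
  have hSn : S.Nonempty := Finset.card_pos.1 (by omega)
  have hTn : T.Nonempty := Finset.card_pos.1 (by omega)
  have hna' : ¬ G.Adj y x := fun h => hna h.symm
  obtain ⟨c, hcT, hxc⟩ := aux_meet G hsrg hne hna S T hS hT hST hTn hcard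
  obtain ⟨d, hdS, hyd⟩ := aux_meet G hsrg hne.symm hna' T S hT hS hTS hSn (by omega)
  have h1 := aux_size G hsrg S T hS hST hcT hxc
  have h2 := aux_size G hsrg T S hT hTS hdS hyd
  have h3 := Finset.pred_card_le_card_erase (s := S) (a := c)
  have h4 := Finset.pred_card_le_card_erase (s := T) (a := d)
  by_cases h : T.card = lam + 1
  · exact aux_final G hsrg hk hne hna S T hS hT hST hcard h hdS hyd
  · exact aux_final G hsrg hk hne.symm hna' T S hT hS hTS (by omega) (by omega) hcT hxc

lemma aux_matching {n k lam mu : ℕ} (hsrg : G.IsSRGWith n k lam mu) (hk : 2 * lam ≤ k)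
    {x y : V} (hne : x ≠ y) (hna : ¬ G.Adj x y) :
    ∃ f : {u // G.Adj x u} → V, Function.Injective f ∧
      ∀ u, G.Adj y (f u) ∧ (u : V) ≠ f u ∧ ¬ G.Adj u (f u) := by
  obtain ⟨f, hf, hf2⟩ := (Finset.all_card_le_biUnion_card_iff_exists_injective
    (fun u : {u // G.Adj x u} =>
      (G.neighborFinset y).filter (fun v => (u : V) ≠ v ∧ ¬ G.Adj u v))).1 (by
    intro S
    by_contra! hlt
    set N := S.biUnion (fun u : {u // G.Adj x u} =>
      (G.neighborFinset y).filter (fun v => (u : V) ≠ v ∧ ¬ G.Adj u v)) with hN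
    have hNy : N ⊆ G.neighborFinset y := by
      intro v hv
      rw [hN, mem_biUnion] at hv
      obtain ⟨u, _, h⟩ := hv
      exact (mem_filter.1 h).1
    refine aux_key G hsrg hk hne hna (S.map (Function.Embedding.subtype _))
      (G.neighborFinset y \ N) ?_ ?_ ?_ ?_
    · intro s hs
      rw [mem_map] at hs
      obtain ⟨u, _, rfl⟩ := hs
      exact u.2
    · intro t ht
      rw [mem_sdiff, SimpleGraph.mem_neighborFinset] at ht
      exact ht.1
    · intro s hs t ht
      rw [mem_map] at hs
      obtain ⟨u, hu, rfl⟩ := hs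
      rw [mem_sdiff] at ht
      by_contra! hcon
      exact ht.2 (mem_biUnion.2 ⟨u, hu, mem_filter.2 ⟨ht.1, hcon⟩⟩)
    · have h1 := Finset.card_sdiff_add_card_eq_card hNy
      rw [SimpleGraph.card_neighborFinset_eq_degree, hsrg.regular y] at h1
      rw [card_map]
      omega)
  refine ⟨f, hf, fun u => ?_⟩
  have := hf2 u
  rw [mem_filter, SimpleGraph.mem_neighborFinset] at this
  exact this

end helpers

/-- For a connected, non-complete strongly regular graph with parameters
$(n, k, λ, μ)$ satisfying $2·\max(λ, μ) ≤ k$ or $2λ < k$, the forbidden set `F`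
equals $F_0$: the only forbidden states are the diagonal and adjacent pairs. -/
theorem srg_forbidden_eq_F0 {V : Type*} [Fintype V] [DecidableEq V]
    (G : SimpleGraph V) [DecidableRel G.Adj]
    (n k lam mu : ℕ) (hsrg : G.IsSRGWith n k lam mu)
    (hconn : G.Connected)
    (hnoncomplete : ∃ x y : V, x ≠ y ∧ ¬ G.Adj x y)
    (hparam : 2 * max lam mu ≤ k ∨ 2 * lam < k)
    (F : Set (V × V)) (hF : IsLeast {S : Set (V × V) | ForbiddenClosed G S} F) :
    F = {p : V × V | p.1 = p.2 ∨ G.Adj p.1 p.2} := by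
  have hk : 2 * lam ≤ k := by omega
  apply Set.Subset.antisymm
  · apply hF.2
    refine ⟨fun x y h => h, ?_⟩
    intro x y hno
    by_contra hxy
    rw [Set.mem_setOf_eq, not_or] at hxy
    obtain ⟨f, hf, hf2⟩ := aux_matching G hsrg hk hxy.1 hxy.2
    apply hno
    have hsurj : ∀ v, G.Adj y v → ∃ u, f u = v := by
      have himg : (univ.image f) = G.neighborFinset y := by
        apply Finset.eq_of_subset_of_card_le
        · intro v hv
          obtain ⟨u, _, rfl⟩ := mem_image.1 hv
          rw [SimpleGraph.mem_neighborFinset]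
          exact (hf2 u).1
        · rw [card_image_of_injective _ hf, SimpleGraph.card_neighborFinset_eq_degree,
            hsrg.regular y, ← hsrg.regular x, ← SimpleGraph.card_neighborSet_eq_degree, card_univ]
          exact le_of_eq (Fintype.card_congr (Equiv.refl _))
      intro v hv
      rw [← SimpleGraph.mem_neighborFinset, ← himg] at hv
      obtain ⟨u, _, h⟩ := mem_image.1 hv
      exact ⟨u, h⟩
    classical
    refine ⟨fun p => if (∃ h : G.Adj x p.1, f ⟨p.1, h⟩ = p.2) then 1 / (k : ℝ) else 0,
      ?_, ?_, ?_, ?_⟩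
    · intro p
      dsimp only
      split_ifs <;> positivity
    · intro u v hw
      dsimp only at hw
      split_ifs at hw with h
      · obtain ⟨h, rfl⟩ := h
        refine ⟨h, (hf2 _).1, ?_⟩
        have := (hf2 ⟨u, h⟩).2
        rintro (h' | h')
        · exact this.1 h'
        · exact this.2 h'
      · exact absurd rfl hw
    · intro u hu
      rw [hsrg.regular x, Finset.sum_eq_single (f ⟨u, hu⟩)]
      · exact if_pos ⟨hu, rfl⟩
      · intro v _ hv
        refine if_neg ?_
        rintro ⟨_, h⟩
        exact hv h.symm
      · intro h
        exact absurd (mem_univ _) h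
    · intro v hv
      obtain ⟨u, rfl⟩ := hsurj v hv
      rw [hsrg.regular y, Finset.sum_eq_single (u : V)]
      · exact if_pos ⟨u.2, rfl⟩
      · intro u' _ hu'
        refine if_neg ?_
        rintro ⟨h', h⟩
        exact hu' (congrArg Subtype.val (hf h))
      · intro h
        exact absurd (mem_univ _) h
  · rintro ⟨x, y⟩ h
    exact hF.1.1 x y h
end

section
/- Let G be a connected, non-complete strongly regular graph with parameters (n, k, λ, μ) such that 2·max(λ, μ) ≤ k or 2λ < k. Then for any two distinct non-adjacent vertices x and y, there exists a bijection m : N(x) → N(y) between their neighborhoods such that for every v ∈ N(x), m(v) ≠ v and m(v) is not adjacent to v. -/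
open Finset

theorem aux_common_s18 {V : Type*} [Fintype V] [DecidableEq V]
    (G : SimpleGraph V) [DecidableRel G.Adj]
    (n k lam mu : ℕ) (hsrg : G.IsSRGWith n k lam mu)
    (x y : V) (hxy : x ≠ y) (hna : ¬ G.Adj x y) (S T : Finset V)
    (hS : S ⊆ G.neighborFinset x) (hT : T ⊆ G.neighborFinset y)
    (h : ∀ s ∈ S, ∀ t ∈ T, s = t ∨ G.Adj s t) (hc : k < #S + #T) :
    ∃ c ∈ S, G.Adj y c := by
  by_contra! hcon
  have hTk : #T ≤ k := by
    have := card_le_card hT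
    rwa [G.card_neighborFinset_eq_degree, hsrg.regular.degree_eq] at this
  have hxk : #(G.neighborFinset x) = k := by
    rw [G.card_neighborFinset_eq_degree, hsrg.regular.degree_eq]
  have hmu : ∀ a b : V, a ≠ b → ¬ G.Adj a b →
      #(G.neighborFinset a ∩ G.neighborFinset b) = mu := by
    intro a b h1 h2
    rw [← hsrg.of_not_adj h1 h2, ← Set.toFinset_card]
    congr 1
    ext w
    rw [Set.mem_toFinset, SimpleGraph.mem_commonNeighbors]
    simp
  rcases S.eq_empty_or_nonempty with rfl | ⟨s, hs⟩
  · simp at hc; omega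
  have hs1 := hS hs
  rw [SimpleGraph.mem_neighborFinset] at hs1
  have h1 : T ⊆ G.neighborFinset s ∩ G.neighborFinset y := by
    intro t ht
    have ht1 := hT ht
    rw [SimpleGraph.mem_neighborFinset] at ht1
    rcases h s hs t ht with rfl | h2
    · exact absurd ht1 (hcon _ hs)
    · simp [ht1, h2]
  have h2 := card_le_card h1
  rw [hmu s y (by rintro rfl; exact hna hs1) (fun h => hcon s hs h.symm)] at h2
  have h3 : Disjoint S (G.neighborFinset x ∩ G.neighborFinset y) := by
    rw [Finset.disjoint_left]
    intro a ha hb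
    simp at hb
    exact hcon a ha hb.2
  have h4 := card_le_card (union_subset hS (inter_subset_left (s₂ := G.neighborFinset y)))
  rw [card_union_of_disjoint h3, hmu x y hxy hna, hxk] at h4
  omega

theorem aux_inter {V : Type*} [Fintype V] [DecidableEq V]
    (G : SimpleGraph V) [DecidableRel G.Adj]
    (n k lam mu : ℕ) (hsrg : G.IsSRGWith n k lam mu)
    (x y : V) (hxy : x ≠ y) (hna : ¬ G.Adj x y) (S T : Finset V)
    (hS : S ⊆ G.neighborFinset x) (hT : T ⊆ G.neighborFinset y)
    (h : ∀ s ∈ S, ∀ t ∈ T, s = t ∨ G.Adj s t) (hc : k < #S + #T)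
    (hl : lam < #T) : ∃ c ∈ S, c ∈ T := by
  obtain ⟨c, hcS, hyc⟩ := aux_common_s18 G n k lam mu hsrg x y hxy hna S T hS hT h hc
  refine ⟨c, hcS, ?_⟩
  by_contra hcT
  have h1 : T ⊆ (G.commonNeighbors c y).toFinset := by
    intro t ht
    have ht1 := hT ht
    rw [SimpleGraph.mem_neighborFinset] at ht1
    rcases h c hcS t ht with rfl | h2
    · exact absurd ht hcT
    · rw [Set.mem_toFinset, SimpleGraph.mem_commonNeighbors]
      exact ⟨h2, ht1⟩
  have h2 := card_le_card h1
  rw [Set.toFinset_card, hsrg.of_adj c y hyc.symm] at h2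
  omega

theorem aux_core {V : Type*} [Fintype V] [DecidableEq V]
    (G : SimpleGraph V) [DecidableRel G.Adj]
    (n k lam mu : ℕ) (hsrg : G.IsSRGWith n k lam mu) (hk : 2 * lam ≤ k)
    (x y : V) (hxy : x ≠ y) (hna : ¬ G.Adj x y) (S T : Finset V)
    (hS : S ⊆ G.neighborFinset x) (hT : T ⊆ G.neighborFinset y)
    (h : ∀ s ∈ S, ∀ t ∈ T, s = t ∨ G.Adj s t) : #S + #T ≤ k := by
  by_contra! hc
  have hex : ∃ c ∈ S, c ∈ T := by
    by_cases hl : lam < #T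
    · exact aux_inter G n k lam mu hsrg x y hxy hna S T hS hT h hc hl
    · obtain ⟨c, h1, h2⟩ := aux_inter G n k lam mu hsrg y x hxy.symm (fun h => hna h.symm) T S hT hS
        (fun s hs t ht => (h t ht s hs).imp Eq.symm SimpleGraph.Adj.symm) (by omega) (by omega)
      exact ⟨c, h2, h1⟩
  have hadj : ∀ d ∈ S ∩ T, ∀ a ∈ insert x (insert y (S ∪ T)), a ≠ d → G.Adj d a := by
    intro d hd a ha hne
    rw [mem_inter] at hd
    have h1 := hS hd.1
    have h2 := hT hd.2
    rw [SimpleGraph.mem_neighborFinset] at h1 h2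
    simp only [mem_insert, mem_union] at ha
    rcases ha with rfl | rfl | ha | ha
    · exact h1.symm
    · exact h2.symm
    · exact ((h a ha d hd.2).resolve_left hne).symm
    · exact (h d hd.1 a ha).resolve_left hne.symm
  have hxS : x ∉ S := fun hh => by simpa using hS hh
  have hyT : y ∉ T := fun hh => by simpa using hT hh
  have hxT : x ∉ T := fun hh => hna ((G.mem_neighborFinset y x).1 (hT hh)).symm
  have hyS : y ∉ S := fun hh => hna (by simpa using hS hh)
  have hcard : #(insert x (insert y (S ∪ T))) = #(S ∪ T) + 2 := by
    rw [card_insert_of_notMem (by simp [hxy, hxS, hxT]), card_insert_of_notMem (by simp [hyS, hyT])]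
  have hun := card_union_add_card_inter S T
  obtain ⟨c, hcS, hcT⟩ := hex
  have hcD : c ∈ S ∩ T := mem_inter.2 ⟨hcS, hcT⟩
  have hD : 1 < #(S ∩ T) := by
    have h1 : (insert x (insert y (S ∪ T))).erase c ⊆ G.neighborFinset c := by
      intro a ha
      rw [mem_erase] at ha
      rw [SimpleGraph.mem_neighborFinset]
      exact hadj c hcD a ha.2 ha.1
    have h2 := card_le_card h1
    rw [G.card_neighborFinset_eq_degree, hsrg.regular.degree_eq,
      card_erase_of_mem (by simp [hcS]), hcard] at h2
    omega
  obtain ⟨d, hd, hdc⟩ := exists_mem_ne hD c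
  have hdS := (mem_inter.1 hd).1
  have h1 : ((insert x (insert y (S ∪ T))).erase c).erase d ⊆ (G.commonNeighbors c d).toFinset := by
    intro a ha
    rw [mem_erase, mem_erase] at ha
    rw [Set.mem_toFinset]
    exact ⟨hadj c hcD a ha.2.2 ha.2.1, hadj d hd a ha.2.2 ha.1⟩
  have h2 := card_le_card h1
  rw [Set.toFinset_card, hsrg.of_adj c d (hadj c hcD d (by simp [hdS]) hdc),
    card_erase_of_mem (by simp [hdS, hdc]), card_erase_of_mem (by simp [hcS]), hcard] at h2
  have h3 := card_le_card (subset_union_left (s₁ := S) (s₂ := T))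
  have h4 := card_le_card (subset_union_right (s₁ := S) (s₂ := T))
  omega

/-- For a connected, non-complete strongly regular graph with parameters
$(n, k, λ, μ)$ satisfying $2·\max(λ, μ) ≤ k$ or $2λ < k$: for any two distinct
non-adjacent vertices $x$ and $y$ there is a bijection $m : N(x) → N(y)$ such that
every $v ∈ N(x)$ satisfies $m(v) ≠ v$ and $m(v)$ is not adjacent to $v$. -/
theorem srg_nonadjacent_neighborhood_matching {V : Type*} [Fintype V] [DecidableEq V]
    (G : SimpleGraph V) [DecidableRel G.Adj]
    (n k lam mu : ℕ) (hsrg : G.IsSRGWith n k lam mu)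
    (hconn : G.Connected)
    (hnoncomplete : ∃ x y : V, x ≠ y ∧ ¬ G.Adj x y)
    (hparam : 2 * max lam mu ≤ k ∨ 2 * lam < k) :
    ∀ x y : V, x ≠ y → ¬ G.Adj x y →
      ∃ m : V → V, Set.BijOn m (G.neighborSet x) (G.neighborSet y) ∧
        ∀ v ∈ G.neighborSet x, m v ≠ v ∧ ¬ G.Adj v (m v) := by
  intro x y hxy hna
  have hk : 2 * lam ≤ k := by omega
  have hdeg : ∀ z, #(G.neighborFinset z) = k := fun z => by
    rw [G.card_neighborFinset_eq_degree, hsrg.regular.degree_eq]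
  let t : {v // v ∈ G.neighborFinset x} → Finset V := fun v =>
    (G.neighborFinset y).filter (fun w => w ≠ v.1 ∧ ¬ G.Adj v.1 w)
  have hall : ∀ s : Finset {v // v ∈ G.neighborFinset x}, #s ≤ #(s.biUnion t) := by
    intro s
    have hsub : s.biUnion t ⊆ G.neighborFinset y := by
      intro w hw
      obtain ⟨v, _, hv⟩ := mem_biUnion.1 hw
      exact (mem_filter.1 hv).1
    have := aux_core G n k lam mu hsrg hk x y hxy hna (s.map (Function.Embedding.subtype _))
      (G.neighborFinset y \ s.biUnion t)
      (by
        intro a ha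
        obtain ⟨v, _, rfl⟩ := mem_map.1 ha
        exact v.2)
      sdiff_subset
      (by
        intro a ha w hw
        obtain ⟨v, hv, rfl⟩ := mem_map.1 ha
        rw [mem_sdiff] at hw
        by_contra! hcon
        exact hw.2 (mem_biUnion.2 ⟨v, hv, mem_filter.2 ⟨hw.1, fun e => hcon.1 e.symm, hcon.2⟩⟩))
    rw [card_map, card_sdiff_of_subset hsub, hdeg] at this
    have h2 := card_le_card hsub
    rw [hdeg] at h2
    omega
  obtain ⟨f, hf, hft⟩ := (all_card_le_biUnion_card_iff_exists_injective t).1 hall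
  let m : V → V := fun v => if h : v ∈ G.neighborFinset x then f ⟨v, h⟩ else v
  have hm : ∀ v (h : v ∈ G.neighborFinset x), m v = f ⟨v, h⟩ := fun v h => dif_pos h
  have hmaps : Set.MapsTo m (G.neighborFinset x) (G.neighborFinset y) := by
    intro v hv
    rw [hm v hv]
    exact (mem_filter.1 (hft ⟨v, hv⟩)).1
  have hinj : Set.InjOn m (G.neighborFinset x) := by
    intro a ha b hb hab
    rw [hm a ha, hm b hb] at hab
    exact congrArg Subtype.val (hf hab)
  have hsurj : Set.SurjOn m (G.neighborFinset x) (G.neighborFinset y) :=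
    surjOn_of_injOn_of_card_le m hmaps hinj (by rw [hdeg, hdeg])
  refine ⟨m, ?_, ?_⟩
  · have := Set.BijOn.mk hmaps hinj hsurj
    simpa only [SimpleGraph.coe_neighborFinset] using this
  · intro v hv
    have hv' : v ∈ G.neighborFinset x := by simpa using hv
    rw [hm v hv']
    exact (mem_filter.1 (hft ⟨v, hv'⟩)).2
end
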